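/- arXiv:0710.5336 — 3 statements merged into one kernel-verified Lean document; each statement's English description precedes it below -/
import Mathlib

section
/- Let k be a field of characteristic not equal to 2 and let f be a non-degenerate quadratic form in k[x₁,x₂,x₃]. Set R = k[x₁,x₂,x₃]/(f). If the equation f = 0 has no non-trivial solution in k, then the divisor class group Cl(R) is trivial. (Samuel's theorem; Proposition 2.2.) -/
/-!
Samuel's theorem (Proposition 2.2): if `k` is a field of characteristic `≠ 2` and `f` is a
non-degenerate quadratic form in `k[x₁,x₂,x₃]` such that `f = 0` has no non-trivial solution
in `k`, then the divisor class group of `R = k[x₁,x₂,x₃]/(f)` is trivial.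
-/

noncomputable section

/-- The length of a module, defined as the Krull dimension (longest chain length) of its lattice
of submodules. -/
def moduleLength (A : Type*) (M : Type*) [CommRing A] [AddCommGroup M] [Module A M] :
    WithBot ℕ∞ :=
  Order.krullDim (Submodule A M)

/-- The group of divisors of `A`: formal `ℤ`-linear combinations of height-one primes. -/
abbrev DivisorGroup (A : Type*) [CommRing A] : Type _ :=
  {P : PrimeSpectrum A // Order.height P = 1} →₀ ℤ

/-- The subgroup of principal divisors: the subgroup generated by the divisors
`div(x) = Σ_P ord_P(x)·[P]` of the nonzero elements `x` of `A`, where `ord_P(x)` is the length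
of the `A_P`-module `A_P/xA_P`. -/
def principalDivisors (A : Type*) [CommRing A] : AddSubgroup (DivisorGroup A) :=
  AddSubgroup.closure
    { d | ∃ x : A, x ≠ 0 ∧ ∀ P : {P : PrimeSpectrum A // Order.height P = 1},
        ∃ n : ℕ, d P = (n : ℤ) ∧
          moduleLength (Localization.AtPrime P.1.asIdeal)
            (Localization.AtPrime P.1.asIdeal ⧸
              Ideal.span {algebraMap A (Localization.AtPrime P.1.asIdeal) x}) = (n : WithBot ℕ∞) }

/-- The divisor class group of `A`: divisors modulo principal divisors. -/
def DivClassGroup (A : Type*) [CommRing A] : Type _ :=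
  DivisorGroup A ⧸ principalDivisors A

theorem samuel_height_one {A : Type*} [CommRing A] [IsDomain A]
    (P : PrimeSpectrum A) (hP : Order.height P = 1)
    (Q : Ideal A) (hQ : Q.IsPrime) (hQ0 : Q ≠ ⊥) (hQP : Q ≤ P.asIdeal) : P.asIdeal = Q := by
  by_contra hne
  have h1 : (⟨Q, hQ⟩ : PrimeSpectrum A) < P := by
    rw [← PrimeSpectrum.asIdeal_lt_asIdeal]
    exact lt_of_le_of_ne hQP (fun h => hne h.symm)
  have h0 : (⟨⊥, Ideal.isPrime_bot⟩ : PrimeSpectrum A) < ⟨Q, hQ⟩ := by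
    rw [← PrimeSpectrum.asIdeal_lt_asIdeal]
    exact bot_lt_iff_ne_bot.mpr hQ0
  have e1 := Order.height_add_one_le h1
  have e0 := Order.height_add_one_le h0
  rw [hP] at e1
  have e2 : (1 : ℕ∞) + 1 ≤ 1 := by
    refine le_trans ?_ e1
    gcongr
    exact le_trans (by simp) e0
  exact absurd e2 (by decide)

theorem samuel_divisor_part {A : Type*} [CommRing A] [IsDomain A]
    (H : ∀ P : Ideal A, P.IsPrime → P ≠ ⊥ → ∃ x ∈ P, Prime x) :
    Subsingleton (DivClassGroup A) := by
  have key : ∀ P : {P : PrimeSpectrum A // Order.height P = 1},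
      Finsupp.single P (1 : ℤ) ∈ principalDivisors A := by
    intro P
    have hP0 : P.1.asIdeal ≠ ⊥ := by
      intro h
      have : IsMin P.1 := by
        intro Q hQ
        rw [← PrimeSpectrum.asIdeal_le_asIdeal, h]
        exact bot_le
      have h2 := Order.height_eq_zero.mpr this
      rw [P.2] at h2
      exact one_ne_zero h2
    obtain ⟨x, hxP, hx⟩ := H P.1.asIdeal P.1.2 hP0
    have hxprime : (Ideal.span {x}).IsPrime := (Ideal.span_singleton_prime hx.ne_zero).mpr hx
    have hle : ∀ P' : {P : PrimeSpectrum A // Order.height P = 1}, x ∈ P'.1.asIdeal →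
        P'.1.asIdeal = Ideal.span {x} := fun P' hx' =>
      samuel_height_one P'.1 P'.2 _ hxprime
        (by simpa using hx.ne_zero) (by simpa [Ideal.span_le] using hx')
    refine AddSubgroup.subset_closure ⟨x, hx.ne_zero, fun P' => ?_⟩
    by_cases hPP : P = P'
    · subst hPP
      refine ⟨1, by simp, ?_⟩
      rw [moduleLength, ← Module.coe_length]
      have hmax : Ideal.span {algebraMap A (Localization.AtPrime P.1.asIdeal) x} =
          IsLocalRing.maximalIdeal (Localization.AtPrime P.1.asIdeal) := by
        rw [← Localization.AtPrime.map_eq_maximalIdeal, ← Set.image_singleton, ← Ideal.map_span,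
          ← hle P hxP]
      have : IsSimpleModule (Localization.AtPrime P.1.asIdeal) (Localization.AtPrime P.1.asIdeal ⧸
              Ideal.span {algebraMap A (Localization.AtPrime P.1.asIdeal) x}) := by
        rw [isSimpleModule_iff_isCoatom, hmax]
        exact Ideal.isMaximal_def.mp inferInstance
      rw [Module.length_eq_one_iff.mpr this]
      rfl
    · refine ⟨0, by simp [hPP], ?_⟩
      rw [moduleLength, ← Module.coe_length]
      have hx' : x ∉ P'.1.asIdeal := by
        intro h
        apply hPP
        apply Subtype.ext
        apply PrimeSpectrum.ext
        rw [hle P hxP, hle P' h]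
      have hu : IsUnit (algebraMap A (Localization.AtPrime P'.1.asIdeal) x) :=
        IsLocalization.map_units (M := P'.1.asIdeal.primeCompl) _ ⟨x, hx'⟩
      have : Subsingleton (Localization.AtPrime P'.1.asIdeal ⧸
              Ideal.span {algebraMap A (Localization.AtPrime P'.1.asIdeal) x}) := by
        rw [Ideal.Quotient.subsingleton_iff]
        exact Ideal.span_singleton_eq_top.mpr hu
      rw [Module.length_eq_zero_iff.mpr this]
      rfl
  have htop : principalDivisors A = ⊤ := by
    rw [eq_top_iff]
    rintro d -
    induction d using Finsupp.induction_linear with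
    | zero => exact zero_mem _
    | add a b ha hb => exact add_mem ha hb
    | single P n =>
      have := zsmul_mem (key P) n
      simpa using this
  unfold DivClassGroup
  rw [htop]
  exact QuotientAddGroup.subsingleton_quotient_top

theorem samuel_nagata {R S : Type*} [CommRing R] [IsDomain R] [IsNoetherianRing R]
    [CommRing S] [IsDomain S] [UniqueFactorizationMonoid S] (φ : R →+* S)
    (hφ : Function.Injective φ) (z : R) (hz : Prime z)
    (hT : Prime (φ z))
    (hs : ∀ s : S, ∃ (n : ℕ) (r : R), φ r = φ z ^ n * s)
    (P : Ideal R) (hP : P.IsPrime) (hP0 : P ≠ ⊥) : ∃ x ∈ P, Prime x := by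
  by_cases hzP : z ∈ P
  · exact ⟨z, hzP, hz⟩
  -- every element whose image is associated to an element of range avoids
  have hzpow : ∀ n, z ^ n ∉ P := fun n h => hzP (hP.mem_of_pow_mem n h)
  -- find prime q
  have step : ∃ (q : S) (n : ℕ) (g : R), Prime q ∧ g ∈ P ∧ φ g = φ z ^ n * q := by
    by_contra hcon
    push Not at hcon
    have claim : ∀ s : S, s ≠ 0 → ∀ (n : ℕ) (r : R), φ r = φ z ^ n * s → r ∉ P := by
      intro s
      induction s using UniqueFactorizationMonoid.induction_on_prime with
      | h₁ => intro h; exact absurd rfl h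
      | h₂ u hu =>
        intro _ n r hr hrP
        obtain ⟨v, hv⟩ := hu.exists_right_inv
        obtain ⟨m, r', hr'⟩ := hs v
        have : r * r' = z ^ (n + m) := by
          apply hφ
          rw [map_mul, hr, hr', map_pow, pow_add]
          linear_combination φ z ^ n * φ z ^ m * hv
        exact hzpow (n + m) (this ▸ P.mul_mem_right r' hrP)
      | h₃ a q ha hq ih =>
        intro hqa n r hr hrP
        obtain ⟨m, r', hr'⟩ := hs q
        obtain ⟨l, r'', hr''⟩ := hs a
        have : z ^ (m + l) * r = z ^ n * (r' * r'') := by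
          apply hφ
          simp only [map_mul, map_pow, hr, hr', hr'', pow_add]
          ring
        have h2 : z ^ n * (r' * r'') ∈ P := this ▸ P.mul_mem_left _ hrP
        rcases hP.mem_or_mem h2 with h | h
        · exact hzpow _ h
        rcases hP.mem_or_mem h with h | h
        · exact hcon q m r' hq h hr'
        · exact ih ha l r'' hr'' h
    obtain ⟨h, hhP, hh0⟩ := Submodule.exists_mem_ne_zero_of_ne_bot hP0
    exact claim (φ h) (by rwa [Ne, map_eq_zero_iff φ hφ]) 0 h (by simp) hhP
  obtain ⟨q, n, g₀, hq, hg₀, hqg⟩ := step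
  have hg₀0 : g₀ ≠ 0 := by
    rintro rfl
    rw [map_zero] at hqg
    exact mul_ne_zero (pow_ne_zero n hT.ne_zero) hq.ne_zero hqg.symm
  obtain ⟨m, g, hzg, rfl⟩ := WfDvdMonoid.max_power_factor hg₀0 hz.irreducible
  have hgP : g ∈ P := (hP.mem_or_mem hg₀).resolve_left (hzpow m)
  have hg0 : g ≠ 0 := right_ne_zero_of_mul hg₀0
  have hzmul : ∀ (j : ℕ) (a : R), g ∣ z ^ j * a → g ∣ a := by
    intro j a ⟨c, hc⟩
    have : z ^ j ∣ c := hz.pow_dvd_of_dvd_mul_left j hzg ⟨a, hc.symm⟩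
    obtain ⟨c', rfl⟩ := this
    refine ⟨c', ?_⟩
    apply mul_left_cancel₀ (pow_ne_zero j hz.ne_zero)
    rw [hc]; ring
  have hqT : ¬ q ∣ φ z := by
    intro hd
    obtain ⟨c, hc⟩ := hd
    obtain ⟨l, r, hr⟩ := hs c
    have : z ^ m * g * r = z ^ (n + l + 1) := by
      apply hφ
      rw [map_mul, hqg, hr, map_pow]
      linear_combination -(φ z ^ (n+l)) * hc
    exact hzpow _ (this ▸ P.mul_mem_right r hg₀)
  have hdvd : ∀ a : R, q ∣ φ a → g ∣ a := by
    rintro a ⟨s, hs'⟩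
    obtain ⟨l, r, hr⟩ := hs s
    apply hzmul (n + l)
    refine ⟨z ^ m * r, ?_⟩
    apply hφ
    have : φ (z ^ m) * φ g = φ z ^ n * q := by rw [← map_mul, hqg]
    simp only [map_mul, map_pow, hs', hr, pow_add] at *
    linear_combination -(φ z ^ l * s) * this
  have hqg' : q ∣ φ g := by
    have h : q ∣ φ z ^ m * φ g := by
      rw [← map_pow, ← map_mul, hqg]; exact dvd_mul_left _ _
    exact (hq.dvd_or_dvd h).resolve_left fun h => hqT (hq.dvd_of_dvd_pow h)
  refine ⟨g, hgP, hg0, ?_, ?_⟩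
  · intro hu
    exact hP.ne_top (Ideal.eq_top_of_isUnit_mem P hgP hu)
  · rintro a b hab
    have : q ∣ φ a * φ b := by
      rw [← map_mul]; exact hqg'.trans (map_dvd φ hab)
    exact (hq.dvd_or_dvd this).imp (hdvd a) (hdvd b)

section samuelB
open Polynomial

variable {k : Type*} [Field k]

/-- affine conic coordinate ring -/
abbrev SamuelD (b c d e g : k) : Type _ :=
  QuadraticAlgebra k[X] (-(C d * X ^ 2 + C e * X + C g)) (-(C b * X + C c))

/-- anisotropy -/
def SamuelAniso (b c d e g : k) : Prop :=
  ∀ s t w : k, s ^ 2 + b * s * t + c * s * w + d * t ^ 2 + e * t * w + g * w ^ 2 = 0 →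
    s = 0 ∧ t = 0 ∧ w = 0

theorem samuel_norm_deg {b c d e g : k} (h : SamuelAniso b c d e g) (x : SamuelD b c d e g)
    (hx : x ≠ 0) : ∃ m : ℕ, x.norm ≠ 0 ∧ x.norm.natDegree = 2 * m ∧
      ∀ n : ℕ, x.re.natDegree ≤ n → (x.im = 0 ∨ x.im.natDegree < n) → m ≤ n := by
  rcases x with ⟨u, v⟩
  have hN : QuadraticAlgebra.norm (⟨u, v⟩ : SamuelD b c d e g) =
      u * u + (-(C b * X + C c)) * u * v - (-(C d * X ^ 2 + C e * X + C g)) * v * v := rfl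
  rw [hN]
  dsimp only
  by_cases hv : v = 0
  · subst hv
    have hu : u ≠ 0 := by
      rintro rfl; exact hx rfl
    refine ⟨u.natDegree, by simpa using hu, ?_, fun n hn _ => hn⟩
    simp [natDegree_mul hu hu]; ring
  · set m := max u.natDegree (v.natDegree + 1) with hm
    obtain ⟨m', hm'⟩ : ∃ m', m = m' + 1 := ⟨m - 1, by omega⟩
    have hu' : u.natDegree ≤ m' + 1 := by omega
    have hv' : v.natDegree ≤ m' := by omega
    have hB : (-(C b * X + C c) : k[X]).natDegree ≤ 1 := by compute_degree
    have hC : (-(C d * X ^ 2 + C e * X + C g) : k[X]).natDegree ≤ 2 := by compute_degree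
    have hBu : (-(C b * X + C c) * u : k[X]).natDegree ≤ 1 + (m' + 1) :=
      natDegree_mul_le_of_le hB hu'
    have hCv : (-(C d * X ^ 2 + C e * X + C g) * v : k[X]).natDegree ≤ 2 + m' :=
      natDegree_mul_le_of_le hC hv'
    have e1 : (u * u).coeff (2 * m) = u.coeff (m'+1) * u.coeff (m'+1) := by
      rw [show 2 * m = (m'+1) + (m'+1) by omega]
      exact coeff_mul_add_eq_of_natDegree_le hu' hu'
    have e2 : (-(C b * X + C c) * u * v).coeff (2 * m) = - b * u.coeff (m'+1) * v.coeff m' := by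
      rw [show 2 * m = (1 + (m'+1)) + m' by omega,
        coeff_mul_add_eq_of_natDegree_le hBu hv', coeff_mul_add_eq_of_natDegree_le hB hu']
      simp [coeff_C]
    have e3 : (-(C d * X ^ 2 + C e * X + C g) * v * v).coeff (2 * m)
        = - d * v.coeff m' * v.coeff m' := by
      rw [show 2 * m = (2 + m') + m' by omega,
        coeff_mul_add_eq_of_natDegree_le hCv hv', coeff_mul_add_eq_of_natDegree_le hC hv']
      simp
    have hdeg : (u * u + (-(C b * X + C c)) * u * v -
        (-(C d * X ^ 2 + C e * X + C g)) * v * v).natDegree ≤ 2 * m := by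
      refine (natDegree_sub_le _ _).trans (max_le ((natDegree_add_le _ _).trans (max_le ?_ ?_)) ?_)
      · exact (natDegree_mul_le_of_le hu' hu').trans (by omega)
      · exact (natDegree_mul_le_of_le hBu hv').trans (by omega)
      · exact (natDegree_mul_le_of_le hCv hv').trans (by omega)
    have hcoeff : (u * u + (-(C b * X + C c)) * u * v -
        (-(C d * X ^ 2 + C e * X + C g)) * v * v).coeff (2 * m) ≠ 0 := by
      rw [coeff_sub, coeff_add, e1, e2, e3]
      intro h0
      obtain ⟨hs, ht, -⟩ := h (u.coeff (m'+1)) (-v.coeff m') 0 (by linear_combination h0)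
      rcases le_total u.natDegree (v.natDegree + 1) with hle | hle
      · have : m' = v.natDegree := by omega
        rw [neg_eq_zero, this, coeff_natDegree, leadingCoeff_eq_zero] at ht
        exact hv ht
      · have h3 : m' + 1 = u.natDegree := by omega
        rw [h3, coeff_natDegree, leadingCoeff_eq_zero] at hs
        rw [hs] at h3
        simp at h3
    refine ⟨m, ?_, ?_, ?_⟩
    · intro h0; rw [h0] at hcoeff; simp at hcoeff
    · exact le_antisymm hdeg (le_natDegree_of_ne_zero hcoeff)
    · intro n h1 h2
      rcases h2 with h2 | h2
      · exact absurd h2 hv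
      · omega

theorem samuel_D_domain {b c d e g : k} (h : SamuelAniso b c d e g) :
    IsDomain (SamuelD b c d e g) := by
  have : NoZeroDivisors (SamuelD b c d e g) := by
    refine ⟨fun {x y} hxy => ?_⟩
    by_contra! hne
    obtain ⟨_, hx, -⟩ := samuel_norm_deg h x hne.1
    obtain ⟨_, hy, -⟩ := samuel_norm_deg h y hne.2
    have := congrArg QuadraticAlgebra.norm hxy
    rw [map_mul, QuadraticAlgebra.norm_zero] at this
    exact mul_ne_zero hx hy this
  exact NoZeroDivisors.to_isDomain _

theorem samuel_alg_norm {b c d e g : k} (x : SamuelD b c d e g) :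
    Algebra.norm k[X] x = x.norm := by
  rw [← QuadraticAlgebra.det_toLinearMap_eq_norm, Algebra.norm_apply]
  rfl

theorem samuel_finrank {b c d e g : k} (h : SamuelAniso b c d e g) (x : SamuelD b c d e g)
    (hx : x ≠ 0) : Module.finrank k (SamuelD b c d e g ⧸ Ideal.span {x}) = x.norm.natDegree ∧
      FiniteDimensional k (SamuelD b c d e g ⧸ Ideal.span {x}) := by
  have := samuel_D_domain h
  constructor
  · rw [← samuel_alg_norm]
    exact finrank_quotient_span_eq_natDegree_norm (QuadraticAlgebra.basis _ _) hx
  · exact Module.Finite.equiv (Ideal.quotientEquivDirectSum k (QuadraticAlgebra.basis _ _)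
      (Ideal.span_singleton_eq_bot.not.2 hx)).symm

theorem samuel_exists_small {b c d e g : k} (P : Ideal (SamuelD b c d e g))
    [FiniteDimensional k (SamuelD b c d e g ⧸ P)] (n : ℕ)
    (hn : Module.finrank k (SamuelD b c d e g ⧸ P) < 2 * n + 1) :
    ∃ x ∈ P, x ≠ 0 ∧ x.re.natDegree ≤ n ∧ (x.im = 0 ∨ x.im.natDegree < n) := by
  let F : (degreeLT k (n+1) × degreeLT k n) →ₗ[k] SamuelD b c d e g :=
    { toFun := fun p => ⟨p.1.1, p.2.1⟩
      map_add' := fun p q => rfl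
      map_smul' := fun r p => rfl }
  let G := (Ideal.Quotient.mkₐ k P).toLinearMap ∘ₗ F
  have hfd : ∀ j, FiniteDimensional k (degreeLT k j) := fun j =>
    Module.Finite.equiv (degreeLTEquiv k j).symm
  have hfr : ∀ j, Module.finrank k (degreeLT k j) = j := fun j => by
    rw [(degreeLTEquiv k j).finrank_eq]; simp
  have hker : LinearMap.ker G ≠ ⊥ := by
    apply LinearMap.ker_ne_bot_of_finrank_lt
    rw [Module.finrank_prod, hfr, hfr]
    omega
  obtain ⟨p, hp, hp0⟩ := Submodule.exists_mem_ne_zero_of_ne_bot hker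
  refine ⟨F p, ?_, ?_, ?_, ?_⟩
  · exact Ideal.Quotient.eq_zero_iff_mem.mp hp
  · intro h0
    apply hp0
    have h1 : (p.1 : k[X]) = 0 := congrArg QuadraticAlgebra.re h0
    have h2 : (p.2 : k[X]) = 0 := congrArg QuadraticAlgebra.im h0
    exact Prod.ext (Subtype.ext h1) (Subtype.ext h2)
  · have := p.1.2
    rw [mem_degreeLT] at this
    by_cases h0 : (p.1 : k[X]) = 0
    · change (p.1 : k[X]).natDegree ≤ n
      rw [h0]; simp
    · exact Nat.lt_succ_iff.mp ((natDegree_lt_iff_degree_lt h0).mpr this)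
  · have := p.2.2
    rw [mem_degreeLT] at this
    by_cases h0 : (p.2 : k[X]) = 0
    · exact Or.inl h0
    · exact Or.inr ((natDegree_lt_iff_degree_lt h0).mpr this)

theorem samuel_finrank_lt {D : Type*} [CommRing D] [Algebra k D] (I P : Ideal D)
    [FiniteDimensional k (D ⧸ I)] (hIP : I ≤ P) :
    Module.finrank k (D ⧸ I) = Module.finrank k (D ⧸ P) +
      Module.finrank k (LinearMap.ker (Ideal.Quotient.factorₐ k hIP).toLinearMap) := by
  rw [← LinearMap.finrank_range_add_finrank_ker (Ideal.Quotient.factorₐ k hIP).toLinearMap,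
    LinearMap.range_eq_top.mpr, finrank_top]
  exact Ideal.Quotient.factor_surjective hIP

theorem samuel_ker_mem {D : Type*} [CommRing D] [Algebra k D] (I P : Ideal D) (hIP : I ≤ P)
    (x : D) : Ideal.Quotient.mk I x ∈
      LinearMap.ker (Ideal.Quotient.factorₐ k hIP).toLinearMap ↔ x ∈ P := by
  rw [LinearMap.mem_ker]
  exact Ideal.Quotient.eq_zero_iff_mem

theorem samuel_rel (b c d e g : k) : (QuadraticAlgebra.omega : SamuelD b c d e g) ^ 2 +
    algebraMap k _ b * QuadraticAlgebra.omega * algebraMap k[X] _ X +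
    algebraMap k _ c * QuadraticAlgebra.omega +
    algebraMap k _ d * (algebraMap k[X] _ X) ^ 2 +
    algebraMap k _ e * algebraMap k[X] _ X + algebraMap k _ g = 0 := by
  have hk : ∀ a : k, algebraMap k (SamuelD b c d e g) a = algebraMap k[X] _ (C a) := by
    intro a
    rw [IsScalarTower.algebraMap_apply k k[X]]; rfl
  rw [pow_two QuadraticAlgebra.omega, QuadraticAlgebra.omega_mul_omega_eq_algebraMap]
  simp only [hk]
  simp only [Algebra.smul_def, map_neg, map_add, map_mul, map_pow]
  ring

theorem samuel_aux {D E : Type*} [CommRing D] [CommRing E] [Algebra k D] (π : D →+* E)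
    (b c d e g l m : k) (o Y : D) (w : E)
    (rel : o ^ 2 + algebraMap k _ b * o * Y + algebraMap k _ c * o +
    algebraMap k _ d * Y ^ 2 + algebraMap k _ e * Y + algebraMap k _ g = 0)
    (hl : π o * w = π (algebraMap k _ l) * w) (hm : π Y * w = π (algebraMap k _ m) * w) :
    π (algebraMap k _ (l ^ 2 + b * l * m + c * l * 1 + d * m ^ 2 + e * m * 1
        + g * 1 ^ 2)) * w = 0 := by
  have rel2 := congrArg (fun r => π r * w) rel
  simp only [map_add, map_mul, map_pow, map_zero, zero_mul] at rel2
  rw [← rel2]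
  simp only [map_add, map_mul, map_pow, map_one]
  linear_combination (-(π o + π (algebraMap k _ l)) - π (algebraMap k _ b) * π Y
      - π (algebraMap k _ c)) * hl +
    (- π (algebraMap k _ d) * (π Y + π (algebraMap k _ m)) - π (algebraMap k _ e)
      - π (algebraMap k _ b) * π (algebraMap k _ l)) * hm

theorem samuel_D_pid {b c d e g : k} (h : SamuelAniso b c d e g) :
    IsPrincipalIdealRing (SamuelD b c d e g) := by
  have := samuel_D_domain h
  refine IsPrincipalIdealRing.of_prime_ne_bot fun P _ hP0 => ?_
  obtain ⟨y, hyP, hy0⟩ := Submodule.exists_mem_ne_zero_of_ne_bot hP0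
  have hle : ∀ x ∈ P, Ideal.span {x} ≤ P := fun x hx => by simpa [Ideal.span_le] using hx
  have := (samuel_finrank h y hy0).2
  have hfd : FiniteDimensional k (SamuelD b c d e g ⧸ P) :=
    Module.Finite.of_surjective (Ideal.Quotient.factorₐ k (hle y hyP)).toLinearMap
      (Ideal.Quotient.factor_surjective (hle y hyP))
  have hEq : ∀ x (hx : x ∈ P), Module.finrank k
      (LinearMap.ker (Ideal.Quotient.factorₐ k (hle x hx)).toLinearMap) = 0 → x ≠ 0 →
      P = Ideal.span {x} := by
    intro x hx h0 hx0
    have := (samuel_finrank h x hx0).2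
    rw [Submodule.finrank_eq_zero] at h0
    refine le_antisymm (fun w hw => ?_) (hle x hx)
    have := (samuel_ker_mem (k := k) _ P (hle x hx) w).mpr hw
    rw [h0, Submodule.mem_bot] at this
    exact Ideal.Quotient.eq_zero_iff_mem.mp this
  rcases Nat.even_or_odd' (Module.finrank k (SamuelD b c d e g ⧸ P)) with ⟨n, hn | hn⟩
  · obtain ⟨x, hxP, hx0, h1, h2⟩ := samuel_exists_small P n (by omega)
    obtain ⟨m, -, hm, hmn⟩ := samuel_norm_deg h x hx0
    have hmn := hmn n h1 h2
    obtain ⟨hfr, hfd'⟩ := samuel_finrank h x hx0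
    have := samuel_finrank_lt (k := k) _ P (hle x hxP)
    exact ⟨x, hEq x hxP (by omega) hx0⟩
  · exfalso
    obtain ⟨x, hxP, hx0, h1, h2⟩ := samuel_exists_small P (n + 1) (by omega)
    obtain ⟨m, -, hm, hmn⟩ := samuel_norm_deg h x hx0
    have hmn := hmn _ h1 h2
    obtain ⟨hfr, hfd'⟩ := samuel_finrank h x hx0
    have hlt := samuel_finrank_lt (k := k) _ P (hle x hxP)
    have hone : Module.finrank k
      (LinearMap.ker (Ideal.Quotient.factorₐ k (hle x hxP)).toLinearMap) = 1 := by omega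
    obtain ⟨w, hw0, hw⟩ := finrank_eq_one_iff'.mp hone
    obtain ⟨w', hw'⟩ := Ideal.Quotient.mk_surjective w.1
    have hw'P : w' ∈ P := by
      rw [← samuel_ker_mem (k := k) _ P (hle x hxP), hw']
      exact w.2
    have act : ∀ r : SamuelD b c d e g, ∃ l : k,
        Ideal.Quotient.mk (Ideal.span {x}) r * w.1 =
          Ideal.Quotient.mk (Ideal.span {x}) (algebraMap k _ l) * w.1 := by
      intro r
      obtain ⟨l, hl⟩ := hw ⟨Ideal.Quotient.mk _ (r * w'),
        (samuel_ker_mem (k := k) _ P (hle x hxP) _).mpr (P.mul_mem_left r hw'P)⟩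
      refine ⟨l, ?_⟩
      have h3 : l • w.1 = Ideal.Quotient.mk _ (r * w') := congrArg Subtype.val hl
      rw [← hw', ← map_mul, ← h3, ← hw', ← map_mul, ← Algebra.smul_def]
      rfl
    obtain ⟨l, hl⟩ := act QuadraticAlgebra.omega
    obtain ⟨m', hm'⟩ := act (algebraMap k[X] _ X)
    have hz := samuel_aux (Ideal.Quotient.mk (Ideal.span {x})) b c d e g l m' _ _ w.1
      (samuel_rel b c d e g) hl hm'
    have hz2 : (l ^ 2 + b * l * m' + c * l * 1 + d * m' ^ 2 + e * m' * 1
        + g * 1 ^ 2) • w = 0 := by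
      apply Subtype.ext
      rw [Submodule.coe_smul, Algebra.smul_def]
      exact hz
    rcases smul_eq_zero.mp hz2 with h0 | h0
    · exact one_ne_zero (h l m' 1 h0).2.2
    · exact hw0 h0
end samuelB

section samuelC
open Polynomial

variable {k : Type*} [Field k]

/-- normalized quadratic form -/
def SamuelF (b c d e g : k) : MvPolynomial (Fin 3) k :=
  MvPolynomial.X 0 ^ 2 + MvPolynomial.C b * MvPolynomial.X 0 * MvPolynomial.X 1 +
    MvPolynomial.C c * MvPolynomial.X 0 * MvPolynomial.X 2 +
    MvPolynomial.C d * MvPolynomial.X 1 ^ 2 +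
    MvPolynomial.C e * MvPolynomial.X 1 * MvPolynomial.X 2 +
    MvPolynomial.C g * MvPolynomial.X 2 ^ 2

theorem samuel_theta_inj : Function.Injective
    (MvPolynomial.aeval ![C X * X, X] : MvPolynomial (Fin 2) k →ₐ[k] k[X][X]) := by
  let K := FractionRing (MvPolynomial (Fin 2) k)
  let y : K := algebraMap (MvPolynomial (Fin 2) k) K (MvPolynomial.X 0)
  let z : K := algebraMap (MvPolynomial (Fin 2) k) K (MvPolynomial.X 1)
  have hz : z ≠ 0 := by
    intro h
    have := (map_eq_zero_iff _ (IsFractionRing.injective (MvPolynomial (Fin 2) k) K)).mp h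
    exact MvPolynomial.X_ne_zero _ this
  let ψ : k[X][X] →+* K := eval₂RingHom
    (eval₂RingHom ((algebraMap (MvPolynomial (Fin 2) k) K).comp MvPolynomial.C) (y / z)) z
  have hcomp : ψ.comp (MvPolynomial.aeval ![C X * X, X] :
      MvPolynomial (Fin 2) k →ₐ[k] k[X][X]).toRingHom = algebraMap (MvPolynomial (Fin 2) k) K := by
    apply MvPolynomial.ringHom_ext
    · intro r
      simp [ψ, MvPolynomial.aeval_C, Polynomial.algebraMap_apply]
    · intro i
      fin_cases i
      · simp only [ψ, y]
        simp
        exact div_mul_cancel₀ _ hz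
      · simp [ψ, z]
  have hinj := IsFractionRing.injective (MvPolynomial (Fin 2) k) K
  rw [← hcomp] at hinj
  exact Function.Injective.of_comp (f := ψ) hinj

theorem samuel_normal_form (b c d e g : k) (h : MvPolynomial (Fin 3) k) :
    ∃ (u v : MvPolynomial (Fin 2) k) (q : MvPolynomial (Fin 3) k),
      h = MvPolynomial.aeval ![MvPolynomial.X 1, MvPolynomial.X 2] u +
        MvPolynomial.aeval ![MvPolynomial.X 1, MvPolynomial.X 2] v * MvPolynomial.X 0 +
        q * SamuelF b c d e g := by
  induction h using MvPolynomial.induction_on with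
  | C a => exact ⟨MvPolynomial.C a, 0, 0, by simp⟩
  | add p q hp hq =>
    obtain ⟨u, v, r, h1⟩ := hp
    obtain ⟨u', v', r', h2⟩ := hq
    refine ⟨u + u', v + v', r + r', ?_⟩
    rw [h1, h2, map_add, map_add]; ring
  | mul_X p i hp =>
    obtain ⟨u, v, r, h1⟩ := hp
    fin_cases i
    · refine ⟨-(MvPolynomial.C d * MvPolynomial.X 0 ^ 2 +
          MvPolynomial.C e * MvPolynomial.X 0 * MvPolynomial.X 1 +
          MvPolynomial.C g * MvPolynomial.X 1 ^ 2) * v,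
        u - (MvPolynomial.C b * MvPolynomial.X 0 + MvPolynomial.C c * MvPolynomial.X 1) * v,
        r * MvPolynomial.X 0 +
          MvPolynomial.aeval ![MvPolynomial.X 1, MvPolynomial.X 2] v, ?_⟩
      rw [h1]
      simp [SamuelF, MvPolynomial.algebraMap_eq]
      ring
    · refine ⟨u * MvPolynomial.X 0, v * MvPolynomial.X 0, r * MvPolynomial.X 1, ?_⟩
      rw [h1]; simp; ring
    · refine ⟨u * MvPolynomial.X 1, v * MvPolynomial.X 1, r * MvPolynomial.X 2, ?_⟩
      rw [h1]; simp; ring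

theorem samuel_normal_form' (b c d e g : k) (h : MvPolynomial (Fin 3) k) :
    ∃ (u v : k[X]) (q' q : MvPolynomial (Fin 3) k),
      h = aeval (MvPolynomial.X 1) u + aeval (MvPolynomial.X 1) v * MvPolynomial.X 0 +
        q' * MvPolynomial.X 2 + q * SamuelF b c d e g := by
  induction h using MvPolynomial.induction_on with
  | C a => exact ⟨C a, 0, 0, 0, by simp [MvPolynomial.algebraMap_eq]⟩
  | add p q hp hq =>
    obtain ⟨u, v, s, r, h1⟩ := hp
    obtain ⟨u', v', s', r', h2⟩ := hq
    refine ⟨u + u', v + v', s + s', r + r', ?_⟩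
    rw [h1, h2, map_add, map_add]; ring
  | mul_X p i hp =>
    obtain ⟨u, v, s, r, h1⟩ := hp
    fin_cases i
    · refine ⟨-(C d * X ^ 2) * v, u - C b * X * v,
        s * MvPolynomial.X 0 - aeval (MvPolynomial.X 1) v *
          (MvPolynomial.C c * MvPolynomial.X 0 + MvPolynomial.C e * MvPolynomial.X 1 +
            MvPolynomial.C g * MvPolynomial.X 2),
        r * MvPolynomial.X 0 + aeval (MvPolynomial.X 1) v, ?_⟩
      rw [h1]
      simp [SamuelF, MvPolynomial.algebraMap_eq]
      ring
    · refine ⟨u * X, v * X, s * MvPolynomial.X 1, r * MvPolynomial.X 1, ?_⟩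
      rw [h1]; simp; ring
    · refine ⟨0, 0, aeval (MvPolynomial.X 1) u + aeval (MvPolynomial.X 1) v * MvPolynomial.X 0 +
        s * MvPolynomial.X 2, r * MvPolynomial.X 2, ?_⟩
      rw [h1]; simp; ring

/-- the map to `D[T]` -/
def samuelPhi (b c d e g : k) : MvPolynomial (Fin 3) k →ₐ[k] (SamuelD b c d e g)[X] :=
  MvPolynomial.aeval ![C QuadraticAlgebra.omega * X, C (algebraMap k[X] _ X) * X, X]

theorem samuelPhi_F (b c d e g : k) : samuelPhi b c d e g (SamuelF b c d e g) = 0 := by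
  have := congrArg (C : SamuelD b c d e g → (SamuelD b c d e g)[X]) (samuel_rel b c d e g)
  have hk : ∀ a : k, samuelPhi b c d e g (MvPolynomial.C a) = C (algebraMap k _ a) := by
    intro a
    rw [samuelPhi, MvPolynomial.aeval_C, Polynomial.algebraMap_apply]
  have h0 : samuelPhi b c d e g (MvPolynomial.X 0) = C QuadraticAlgebra.omega * X := by
    simp [samuelPhi]
  have h1 : samuelPhi b c d e g (MvPolynomial.X 1) = C (algebraMap k[X] _ X) * X := by
    simp [samuelPhi]
  have h2 : samuelPhi b c d e g (MvPolynomial.X 2) = X := by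
    simp [samuelPhi]
  simp only [C_add, C_mul, C_pow, C_0] at this
  simp only [SamuelF, map_add, map_mul, map_pow, hk, h0, h1, h2]
  linear_combination X ^ 2 * this

theorem samuelPhi_iota (b c d e g : k) (u : MvPolynomial (Fin 2) k) :
    samuelPhi b c d e g (MvPolynomial.aeval ![MvPolynomial.X 1, MvPolynomial.X 2] u) =
      Polynomial.map (algebraMap k[X] (SamuelD b c d e g))
        (MvPolynomial.aeval ![C X * X, X] u) := by
  induction u using MvPolynomial.induction_on with
  | C a =>
    simp only [samuelPhi, MvPolynomial.aeval_C, MvPolynomial.algebraMap_eq,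
      Polynomial.algebraMap_apply, Polynomial.map_C]
    rfl
  | add p q hp hq => simp only [map_add, hp, hq, Polynomial.map_add]
  | mul_X p i hp =>
    rw [map_mul, map_mul, hp, map_mul, Polynomial.map_mul]
    fin_cases i <;> simp [samuelPhi]

theorem samuelPhi_ker (b c d e g : k) (h : MvPolynomial (Fin 3) k)
    (h0 : samuelPhi b c d e g h = 0) : SamuelF b c d e g ∣ h := by
  obtain ⟨u, v, q, rfl⟩ := samuel_normal_form b c d e g h
  have hX : samuelPhi b c d e g (MvPolynomial.X 0) = C QuadraticAlgebra.omega * X := by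
    simp [samuelPhi]
  rw [map_add, map_add, map_mul, map_mul, samuelPhi_F, mul_zero, add_zero, samuelPhi_iota,
    samuelPhi_iota, hX, ← mul_assoc] at h0
  have hv : (MvPolynomial.aeval ![C X * X, X] v : k[X][X]) = 0 := by
    ext1 n
    have := congrArg (fun p => (p.coeff (n + 1)).im) h0
    simpa [QuadraticAlgebra.algebraMap_eq] using this
  have hu : (MvPolynomial.aeval ![C X * X, X] u : k[X][X]) = 0 := by
    rw [hv] at h0
    ext1 n
    have := congrArg (fun p => (p.coeff n).re) h0
    simpa [QuadraticAlgebra.algebraMap_eq] using this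
  have hu' : u = 0 := samuel_theta_inj (by rw [hu, map_zero])
  have hv' : v = 0 := samuel_theta_inj (by rw [hv, map_zero])
  rw [hu', hv']
  simp

theorem samuel_sat (b c d e g : k) (s : (SamuelD b c d e g)[X]) :
    ∃ (n : ℕ) (r : MvPolynomial (Fin 3) k), samuelPhi b c d e g r = X ^ n * s := by
  have h0 : samuelPhi b c d e g (MvPolynomial.X 0) = C QuadraticAlgebra.omega * X := by
    simp [samuelPhi]
  have h1 : samuelPhi b c d e g (MvPolynomial.X 1) = C (algebraMap k[X] _ X) * X := by
    simp [samuelPhi]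
  have h2 : samuelPhi b c d e g (MvPolynomial.X 2) = X := by
    simp [samuelPhi]
  let T : Set (SamuelD b c d e g)[X] :=
    {s | ∃ (n : ℕ) (r : MvPolynomial (Fin 3) k), samuelPhi b c d e g r = X ^ n * s}
  have hadd : ∀ s t, s ∈ T → t ∈ T → s + t ∈ T := by
    rintro s t ⟨n, r, hr⟩ ⟨m, r', hr'⟩
    refine ⟨n + m, MvPolynomial.X 2 ^ m * r + MvPolynomial.X 2 ^ n * r', ?_⟩
    simp only [map_add, map_mul, map_pow, h2, hr, hr']
    ring
  have hmul : ∀ s t, s ∈ T → t ∈ T → s * t ∈ T := by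
    rintro s t ⟨n, r, hr⟩ ⟨m, r', hr'⟩
    refine ⟨n + m, r * r', ?_⟩
    simp only [map_mul, hr, hr']
    ring
  have hX : X ∈ T := ⟨0, MvPolynomial.X 2, by rw [h2]; simp⟩
  have hω : C QuadraticAlgebra.omega ∈ T := ⟨1, MvPolynomial.X 0, by rw [h0]; ring⟩
  have hY : C (algebraMap k[X] _ X) ∈ T := ⟨1, MvPolynomial.X 1, by rw [h1]; ring⟩
  have hk : ∀ a : k, C (algebraMap k[X] _ (C a)) ∈ T := fun a =>
    ⟨0, MvPolynomial.C a, by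
      rw [samuelPhi, MvPolynomial.aeval_C, Polynomial.algebraMap_apply]
      simp
      rfl⟩
  have hp : ∀ p : k[X], C (algebraMap k[X] (SamuelD b c d e g) p) ∈ T := by
    intro p
    induction p using Polynomial.induction_on with
    | C a => exact hk a
    | add p q hp hq => rw [map_add, C_add]; exact hadd _ _ hp hq
    | monomial n a h =>
      rw [pow_succ X n, ← mul_assoc, map_mul, C_mul]
      exact hmul _ _ h hY
  have hD : ∀ x : SamuelD b c d e g, C x ∈ T := by
    intro x
    have : x = algebraMap k[X] _ x.re + algebraMap k[X] _ x.im * QuadraticAlgebra.omega := by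
      ext1 <;> simp
    rw [this, C_add, C_mul]
    exact hadd _ _ (hp _) (hmul _ _ (hp _) hω)
  change s ∈ T
  induction s using Polynomial.induction_on with
  | C a => exact hD a
  | add p q hp hq => exact hadd _ _ hp hq
  | monomial n a h =>
    rw [pow_succ X n, ← mul_assoc]
    exact hmul _ _ h hX

/-- reduction modulo the third variable -/
def samuelChi (b d : k) : MvPolynomial (Fin 3) k →ₐ[k] (QuadraticAlgebra k (-d) (-b))[X] :=
  MvPolynomial.aeval ![C QuadraticAlgebra.omega * X, X, 0]

theorem samuelChi_F (b c d e g : k) : samuelChi b d (SamuelF b c d e g) = 0 := by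
  have hk : ∀ a : k, samuelChi b d (MvPolynomial.C a) = C (algebraMap k _ a) := by
    intro a
    rw [samuelChi, MvPolynomial.aeval_C, Polynomial.algebraMap_apply]
  have h0 : samuelChi b d (MvPolynomial.X 0) = C QuadraticAlgebra.omega * X := by
    simp [samuelChi]
  have h1 : samuelChi b d (MvPolynomial.X 1) = X := by
    simp [samuelChi]
  have h2 : samuelChi b d (MvPolynomial.X 2) = 0 := by
    simp [samuelChi]
  have rel : (QuadraticAlgebra.omega : QuadraticAlgebra k (-d) (-b)) ^ 2 +
      algebraMap k _ b * QuadraticAlgebra.omega + algebraMap k _ d = 0 := by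
    ext1 <;> simp [pow_two]
  have := congrArg (C : QuadraticAlgebra k (-d) (-b) → (QuadraticAlgebra k (-d) (-b))[X]) rel
  simp only [C_add, C_mul, C_pow, C_0] at this
  simp only [SamuelF, map_add, map_mul, map_pow, hk, h0, h1, h2]
  linear_combination X ^ 2 * this

theorem samuelChi_ker (b c d e g : k) (h : MvPolynomial (Fin 3) k)
    (h0 : samuelChi b d h = 0) :
    ∃ q' q, h = q' * MvPolynomial.X 2 + q * SamuelF b c d e g := by
  obtain ⟨u, v, q', q, rfl⟩ := samuel_normal_form' b c d e g h
  have hX : samuelChi b d (MvPolynomial.X 0) = C QuadraticAlgebra.omega * X := by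
    simp [samuelChi]
  have h1 : samuelChi b d (MvPolynomial.X 1) = X := by
    simp [samuelChi]
  have h2 : samuelChi b d (MvPolynomial.X 2) = 0 := by
    simp [samuelChi]
  have h3 : ∀ u : k[X], samuelChi b d (aeval (MvPolynomial.X 1) u) =
      Polynomial.map (algebraMap k _) u := by
    intro u
    rw [← Polynomial.aeval_algHom_apply, h1, Polynomial.aeval_X_left_eq_map]
  rw [map_add, map_add, map_add, map_mul, map_mul, map_mul, samuelChi_F, mul_zero, add_zero, h2,
    mul_zero, add_zero, h3, h3, hX, ← mul_assoc] at h0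
  have hv : v = 0 := by
    ext1 n
    have := congrArg (fun p => (p.coeff (n + 1)).im) h0
    simpa [QuadraticAlgebra.algebraMap_eq] using this
  have hu : u = 0 := by
    rw [hv] at h0
    ext1 n
    have := congrArg (fun p => (p.coeff n).re) h0
    simpa [QuadraticAlgebra.algebraMap_eq] using this
  exact ⟨q', q, by rw [hu, hv]; simp⟩

theorem samuel_normalized {b c d e g : k} (h : SamuelAniso b c d e g) :
    Subsingleton (DivClassGroup (MvPolynomial (Fin 3) k ⧸ Ideal.span {SamuelF b c d e g})) := by
  have := samuel_D_domain h
  have := samuel_D_pid h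
  have : Fact (∀ r : k, r ^ 2 ≠ -d + -b * r) := ⟨fun r hr =>
    one_ne_zero (h r 1 0 (by linear_combination hr)).2.1⟩
  let R := MvPolynomial (Fin 3) k ⧸ Ideal.span {SamuelF b c d e g}
  let φ : R →+* (SamuelD b c d e g)[X] := Ideal.Quotient.lift _ (samuelPhi b c d e g).toRingHom
    (by
      intro a ha
      obtain ⟨q, rfl⟩ := Ideal.mem_span_singleton.mp ha
      change samuelPhi b c d e g _ = 0
      rw [map_mul, samuelPhi_F, zero_mul])
  let χ : R →+* (QuadraticAlgebra k (-d) (-b))[X] := Ideal.Quotient.lift _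
    (samuelChi b d).toRingHom
    (by
      intro a ha
      obtain ⟨q, rfl⟩ := Ideal.mem_span_singleton.mp ha
      change samuelChi b d _ = 0
      rw [map_mul, samuelChi_F, zero_mul])
  have hφmk : ∀ a, φ (Ideal.Quotient.mk _ a) = samuelPhi b c d e g a := fun a => rfl
  have hχmk : ∀ a, χ (Ideal.Quotient.mk _ a) = samuelChi b d a := fun a => rfl
  have hφ : Function.Injective φ := by
    rw [injective_iff_map_eq_zero]
    intro a ha
    obtain ⟨a, rfl⟩ := Ideal.Quotient.mk_surjective a
    exact Ideal.Quotient.eq_zero_iff_mem.mpr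
      (Ideal.mem_span_singleton.mpr (samuelPhi_ker b c d e g a ha))
  have : IsDomain R := hφ.isDomain φ
  let z : R := Ideal.Quotient.mk _ (MvPolynomial.X 2)
  have hφz : φ z = X := by
    rw [hφmk]; simp [samuelPhi]
  have hχz : χ z = 0 := by
    rw [hχmk]; simp [samuelChi]
  have hχ : ∀ a : R, χ a = 0 → z ∣ a := by
    intro a ha
    obtain ⟨a, rfl⟩ := Ideal.Quotient.mk_surjective a
    obtain ⟨q', q, rfl⟩ := samuelChi_ker b c d e g a ha
    refine ⟨Ideal.Quotient.mk _ q', ?_⟩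
    have hF : Ideal.Quotient.mk (Ideal.span {SamuelF b c d e g}) (SamuelF b c d e g) = 0 :=
      Ideal.Quotient.eq_zero_iff_mem.mpr (Ideal.mem_span_singleton_self _)
    rw [map_add, map_mul, map_mul, hF, mul_zero, add_zero, mul_comm]
  have hz : Prime z := by
    refine ⟨?_, ?_, ?_⟩
    · intro h0
      rw [h0, map_zero] at hφz
      exact X_ne_zero hφz.symm
    · intro hu
      have := hu.map χ
      rw [hχz] at this
      exact not_isUnit_zero this
    · rintro a a' ⟨q, hq⟩
      have := congrArg χ hq
      rw [map_mul, map_mul, hχz, zero_mul] at this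
      exact (mul_eq_zero.mp this).imp (hχ a) (hχ a')
  refine samuel_divisor_part (A := R) fun P hP hP0 => ?_
  refine samuel_nagata φ hφ z hz (by rw [hφz]; exact prime_X) ?_ P hP hP0
  intro s
  obtain ⟨n, r, hr⟩ := samuel_sat b c d e g s
  exact ⟨n, Ideal.Quotient.mk _ r, by rw [hφz, hφmk, hr]⟩

theorem samuel_quadratic_form (f : MvPolynomial (Fin 3) k) (hf : f.IsHomogeneous 2) :
    ∃ a b c d e g : k, f = MvPolynomial.C a * MvPolynomial.X 0 ^ 2 +
      MvPolynomial.C b * MvPolynomial.X 0 * MvPolynomial.X 1 +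
      MvPolynomial.C c * MvPolynomial.X 0 * MvPolynomial.X 2 +
      MvPolynomial.C d * MvPolynomial.X 1 ^ 2 +
      MvPolynomial.C e * MvPolynomial.X 1 * MvPolynomial.X 2 +
      MvPolynomial.C g * MvPolynomial.X 2 ^ 2 := by
  rw [f.as_sum]
  refine Finset.sum_induction _ (fun f => ∃ a b c d e g : k,
      f = MvPolynomial.C a * MvPolynomial.X 0 ^ 2 +
      MvPolynomial.C b * MvPolynomial.X 0 * MvPolynomial.X 1 +
      MvPolynomial.C c * MvPolynomial.X 0 * MvPolynomial.X 2 +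
      MvPolynomial.C d * MvPolynomial.X 1 ^ 2 +
      MvPolynomial.C e * MvPolynomial.X 1 * MvPolynomial.X 2 +
      MvPolynomial.C g * MvPolynomial.X 2 ^ 2) ?_ ?_ ?_
  · rintro _ _ ⟨a, b, c, d, e, g, rfl⟩ ⟨a', b', c', d', e', g', rfl⟩
    refine ⟨a + a', b + b', c + c', d + d', e + e', g + g', ?_⟩
    simp only [map_add]; ring
  · exact ⟨0, 0, 0, 0, 0, 0, by simp⟩
  · intro m hm
    have hdeg := hf.degree_eq_sum_deg_support hm
    have h2 : m 0 + m 1 + m 2 = 2 := by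
      have := hf (MvPolynomial.mem_support_iff.mp hm)
      rw [Finsupp.weight_apply, Finsupp.sum_fintype _ _ (by simp)] at this
      simpa [Fin.sum_univ_three] using this
    rw [MvPolynomial.monomial_eq, Finsupp.prod_fintype _ _ (by simp), Fin.prod_univ_three]
    generalize f.coeff m = t
    generalize m 0 = i at *
    generalize m 1 = j at *
    generalize m 2 = l at *
    have hi : i ≤ 2 := by omega
    have hj : j ≤ 2 := by omega
    interval_cases i <;> interval_cases j
    · obtain rfl : l = 2 := by omega
      exact ⟨0, 0, 0, 0, 0, t, by simp⟩
    · obtain rfl : l = 1 := by omega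
      exact ⟨0, 0, 0, 0, t, 0, by simp [mul_assoc]⟩
    · obtain rfl : l = 0 := by omega
      exact ⟨0, 0, 0, t, 0, 0, by simp⟩
    · obtain rfl : l = 1 := by omega
      exact ⟨0, 0, t, 0, 0, 0, by simp [mul_assoc]⟩
    · obtain rfl : l = 0 := by omega
      exact ⟨0, t, 0, 0, 0, 0, by simp [mul_assoc]⟩
    · omega
    · obtain rfl : l = 0 := by omega
      exact ⟨t, 0, 0, 0, 0, 0, by simp⟩
    · omega
    · omega

end samuelC

/-- **Samuel's theorem** (Proposition 2.2).  Let `k` be a field of characteristic not `2` and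
let `f ∈ k[x₁,x₂,x₃]` be a homogeneous polynomial of degree `2` whose associated quadratic form
`Q` (so `f(v) = Q v`) is non-degenerate.  If `f = 0` has no non-trivial solution in `k`, then
the divisor class group of `R = k[x₁,x₂,x₃]/(f)` is trivial. -/
theorem samuel_class_group_trivial
    (k : Type) [Field k] (hchar : ringChar k ≠ 2)
    (f : MvPolynomial (Fin 3) k) (hf : f.IsHomogeneous 2)
    (Q : QuadraticForm k (Fin 3 → k))
    (hfQ : ∀ v : Fin 3 → k, MvPolynomial.eval v f = Q v)
    (hnd : Q.polarBilin.Nondegenerate)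
    (hsol : ∀ v : Fin 3 → k, MvPolynomial.eval v f = 0 → v = 0) :
    Subsingleton (DivClassGroup (MvPolynomial (Fin 3) k ⧸ Ideal.span {f})) := by
  obtain ⟨a, b, c, d, e, g, rfl⟩ := samuel_quadratic_form f hf
  have ha : a ≠ 0 := by
    intro ha
    have := hsol ![1, 0, 0] (by simp [ha])
    exact one_ne_zero (congrFun this 0)
  have han : SamuelAniso (a⁻¹ * b) (a⁻¹ * c) (a⁻¹ * d) (a⁻¹ * e) (a⁻¹ * g) := by
    intro s t w h
    have := hsol ![s, t, w] (by
      simp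
      field_simp at h
      linear_combination h)
    exact ⟨congrFun this 0, congrFun this 1, congrFun this 2⟩
  have hs : Ideal.span {MvPolynomial.C a * MvPolynomial.X 0 ^ 2 +
      MvPolynomial.C b * MvPolynomial.X 0 * MvPolynomial.X 1 +
      MvPolynomial.C c * MvPolynomial.X 0 * MvPolynomial.X 2 +
      MvPolynomial.C d * MvPolynomial.X 1 ^ 2 +
      MvPolynomial.C e * MvPolynomial.X 1 * MvPolynomial.X 2 +
      MvPolynomial.C g * (MvPolynomial.X 2 : MvPolynomial (Fin 3) k) ^ 2} =
      Ideal.span {SamuelF (a⁻¹ * b) (a⁻¹ * c) (a⁻¹ * d) (a⁻¹ * e) (a⁻¹ * g)} := by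
    have hCa : (MvPolynomial.C a : MvPolynomial (Fin 3) k) * MvPolynomial.C a⁻¹ = 1 := by
      rw [← MvPolynomial.C_mul, mul_inv_cancel₀ ha, MvPolynomial.C_1]
    apply le_antisymm <;> rw [Ideal.span_singleton_le_span_singleton]
    · refine ⟨MvPolynomial.C a, ?_⟩
      simp only [SamuelF, MvPolynomial.C_mul]
      linear_combination (-(MvPolynomial.C b * MvPolynomial.X 0 * MvPolynomial.X 1 +
      MvPolynomial.C c * MvPolynomial.X 0 * MvPolynomial.X 2 +
      MvPolynomial.C d * MvPolynomial.X 1 ^ 2 +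
      MvPolynomial.C e * MvPolynomial.X 1 * MvPolynomial.X 2 +
      MvPolynomial.C g * (MvPolynomial.X 2 : MvPolynomial (Fin 3) k) ^ 2)) * hCa
    · refine ⟨MvPolynomial.C a⁻¹, ?_⟩
      simp only [SamuelF, MvPolynomial.C_mul]
      linear_combination (-(MvPolynomial.X 0 : MvPolynomial (Fin 3) k) ^ 2) * hCa
  rw [hs]
  exact samuel_normalized han
end
end

section
/- Let S = ⊕_{n≥0} Sₙ be a commutative Noetherian graded ring with S₀ a field, let S₊ = ⊕_{n>0} Sₙ be the irrelevant ideal, and let A = S_{S₊} be the localization of S at S₊. Then the map of Grothendieck groups G(S) → G(A) induced by localization is an isomorphism. (Kamoi–Kurano; Proposition 2.3.) -/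
universe u

/-- A bundled finitely generated module over `R`. -/
structure FGModuleRep (R : Type u) [CommRing R] : Type (u + 1) where
  carrier : Type u
  [isAddCommGroup : AddCommGroup carrier]
  [isModule : Module R carrier]
  [isFinite : Module.Finite R carrier]

attribute [instance] FGModuleRep.isAddCommGroup FGModuleRep.isModule FGModuleRep.isFinite

variable (R : Type u) [CommRing R]

/-- The subgroup of relations coming from short exact sequences of f.g. modules. -/
def sesRelations : AddSubgroup (FreeAbelianGroup (FGModuleRep R)) :=
  AddSubgroup.closure
    { z | ∃ (M₁ M₂ M₃ : FGModuleRep R) (f : M₁.carrier →ₗ[R] M₂.carrier)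
        (g : M₂.carrier →ₗ[R] M₃.carrier),
        Function.Injective f ∧ Function.Surjective g ∧
        LinearMap.range f = LinearMap.ker g ∧
        z = FreeAbelianGroup.of M₂ - FreeAbelianGroup.of M₁ - FreeAbelianGroup.of M₃ }

/-- The Grothendieck group of finitely generated `R`-modules. -/
def GGroup : Type (u + 1) :=
  FreeAbelianGroup (FGModuleRep R) ⧸ sesRelations R

noncomputable instance : AddCommGroup (GGroup R) :=
  QuotientAddGroup.Quotient.addCommGroup _

/-- The class of a finitely generated module in the Grothendieck group. -/
def GGroup.cls (M : Type u) [AddCommGroup M] [Module R M] [Module.Finite R M] : GGroup R :=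
  QuotientAddGroup.mk (FreeAbelianGroup.of ⟨M⟩)

open TensorProduct

section KK

lemma kk_cls_exact {R : Type u} [CommRing R] {M₁ M₂ M₃ : Type u} [AddCommGroup M₁] [Module R M₁] [Module.Finite R M₁]
    [AddCommGroup M₂] [Module R M₂] [Module.Finite R M₂]
    [AddCommGroup M₃] [Module R M₃] [Module.Finite R M₃]
    (f : M₁ →ₗ[R] M₂) (g : M₂ →ₗ[R] M₃) (hf : Function.Injective f) (hg : Function.Surjective g)
    (h : LinearMap.range f = LinearMap.ker g) :
    GGroup.cls R M₂ = GGroup.cls R M₁ + GGroup.cls R M₃ := by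
  have h0 : FreeAbelianGroup.of (⟨M₂⟩ : FGModuleRep R) - FreeAbelianGroup.of ⟨M₁⟩ -
      FreeAbelianGroup.of ⟨M₃⟩ ∈ sesRelations R :=
    AddSubgroup.subset_closure ⟨⟨M₁⟩, ⟨M₂⟩, ⟨M₃⟩, f, g, hf, hg, h, rfl⟩
  have h1 := (QuotientAddGroup.eq_zero_iff (N := sesRelations R) _).2 h0
  have h2 : GGroup.cls R M₂ - GGroup.cls R M₁ - GGroup.cls R M₃ = 0 := h1
  rw [sub_sub, sub_eq_zero] at h2
  exact h2

lemma kk_cls_zero {R : Type u} [CommRing R] (M : Type u) [AddCommGroup M] [Module R M] [Module.Finite R M]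
    [Subsingleton M] : GGroup.cls R M = 0 := by
  have := kk_cls_exact (R := R) (M₁ := M) (M₂ := M) (M₃ := M) 0 0
    (Function.injective_of_subsingleton _) (fun x => ⟨0, Subsingleton.elim _ _⟩)
    (Subsingleton.elim _ _)
  simpa using this

lemma kk_cls_equiv {R : Type u} [CommRing R] {M M' : Type u} [AddCommGroup M] [Module R M] [Module.Finite R M]
    [AddCommGroup M'] [Module R M'] [Module.Finite R M'] (e : M ≃ₗ[R] M') :
    GGroup.cls R M = GGroup.cls R M' := by
  have := kk_cls_exact (R := R) (M₁ := M) (M₂ := M') (M₃ := PUnit.{u+1}) e.toLinearMap 0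
    e.injective (fun x => ⟨0, Subsingleton.elim _ _⟩)
    (by simp)
  rw [kk_cls_zero PUnit, add_zero] at this
  exact this.symm

/-- universal property -/
noncomputable def kkLift {R : Type u} [CommRing R] {G : Type*} [AddCommGroup G] (F : FGModuleRep R → G)
    (hF : ∀ (M₁ M₂ M₃ : FGModuleRep R) (f : M₁.carrier →ₗ[R] M₂.carrier)
        (g : M₂.carrier →ₗ[R] M₃.carrier),
        Function.Injective f → Function.Surjective g →
        LinearMap.range f = LinearMap.ker g → F M₂ = F M₁ + F M₃) : GGroup R →+ G :=
  QuotientAddGroup.lift (sesRelations R) (FreeAbelianGroup.lift F) (by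
    have : sesRelations R ≤ (FreeAbelianGroup.lift F).ker := by
      refine (AddSubgroup.closure_le _).2 ?_
      rintro z ⟨M₁, M₂, M₃, f, g, hf, hg, h, rfl⟩
      simp [AddMonoidHom.mem_ker, hF M₁ M₂ M₃ f g hf hg h]
    exact this)

lemma kkLift_cls {R : Type u} [CommRing R] {G : Type*} [AddCommGroup G] (F : FGModuleRep R → G) (hF)
    (M : Type u) [AddCommGroup M] [Module R M] [Module.Finite R M] :
    kkLift F hF (GGroup.cls R M) = F ⟨M⟩ := by
  unfold kkLift GGroup.cls
  erw [QuotientAddGroup.lift_mk]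
  simp

lemma kk_ext {R : Type u} [CommRing R] (G : Type*) [AddCommGroup G] (f g : GGroup R →+ G)
    (h : ∀ (M : Type u) [AddCommGroup M] [Module R M] [Module.Finite R M],
      f (GGroup.cls R M) = g (GGroup.cls R M)) : f = g := by
  apply QuotientAddGroup.addMonoidHom_ext
  ext M
  exact h M.carrier

/-- abstract vanishing -/
lemma kk_vanish {S : Type u} [CommRing S] {N M : Type u} [AddCommGroup N] [Module S N]
    [AddCommGroup M] [Module S M] [Module.Finite S M]
    (u : N →ₗ[S] N) (ev : N →ₗ[S] M) (L : Submodule S N) (hL : L.FG)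
    (huL : ∀ x ∈ L, u x ∈ L) (hinj : ∀ x, u x = x → x = 0)
    (hev : ∀ x, ev x = 0 ↔ ∃ y, y - u y = x)
    (hex : ∀ y, ∃ k : ℕ, (u ^ k) y ∈ L) (hsurj : ∀ m, ∃ x ∈ L, ev x = m) :
    GGroup.cls S M = 0 := by
  have : Module.Finite S L := Module.Finite.iff_fg.2 hL
  let f : L →ₗ[S] L := (LinearMap.id - u).restrict (p := L) (q := L)
    (fun x hx => by simpa using L.sub_mem hx (huL x hx))
  have hfa : ∀ x : L, (f x : N) = x - u x := fun x => rfl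
  have key : ∀ k y, (u ^ k) y ∈ L → y - u y ∈ L → y ∈ L := by
    have pk : ∀ k x, x ∈ L → (u ^ k) x ∈ L := by
      intro k
      induction k with
      | zero => intro x hx; simpa using hx
      | succ k ih => intro x hx; rw [pow_succ]; exact ih _ (huL x hx)
    intro k
    induction k with
    | zero => intro y hy _; simpa using hy
    | succ k ih =>
      intro y hy h
      refine ih y ?_ h
      have := L.add_mem (pk k _ h) hy
      rw [pow_succ, map_sub] at this
      simpa using this
  have := kk_cls_exact f (ev.comp L.subtype) (by
      rw [← LinearMap.ker_eq_bot, LinearMap.ker_eq_bot']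
      intro x hx
      have h2 := hfa x
      rw [hx] at h2
      apply Subtype.ext
      apply hinj
      exact (sub_eq_zero.1 h2.symm).symm) (fun m => by
      obtain ⟨x, hx, h⟩ := hsurj m
      exact ⟨⟨x, hx⟩, h⟩) (by
      ext x
      rw [LinearMap.mem_ker, LinearMap.comp_apply]
      constructor
      · rintro ⟨y, rfl⟩
        exact (hev _).2 ⟨y, rfl⟩
      · intro h
        obtain ⟨y, hy⟩ := (hev _).1 h
        obtain ⟨k, hk⟩ := hex y
        refine ⟨⟨y, key k y hk ?_⟩, Subtype.ext hy⟩
        rw [hy]; exact x.2)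
  simpa using this

/-- the twisting ring homomorphism -/
noncomputable def kkσ {S : Type u} [CommRing S] (𝒜 : ℕ → AddSubgroup S) [GradedRing 𝒜] :
    S →+* Polynomial S :=
  (DirectSum.toSemiring (A := fun i => 𝒜 i)
    (fun n => (Polynomial.monomial n).toAddMonoidHom.comp (𝒜 n).subtype)
    (by simp) (by intro i j a b; simp [Polynomial.monomial_mul_monomial])).comp
    (DirectSum.decomposeRingEquiv 𝒜 : S →+* _)

lemma kkσ_apply {S : Type u} [CommRing S] (𝒜 : ℕ → AddSubgroup S) [GradedRing 𝒜] {n : ℕ} {s : S}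
    (hs : s ∈ 𝒜 n) : kkσ 𝒜 s = Polynomial.monomial n s := by
  have : DirectSum.decompose 𝒜 s = DirectSum.of _ n ⟨s, hs⟩ := DirectSum.decompose_of_mem 𝒜 hs
  simp only [kkσ, RingHom.comp_apply]
  change DirectSum.toSemiring _ _ _ (DirectSum.decompose 𝒜 s) = _
  rw [this]
  refine (DirectSum.toSemiring_of _ _ _ _ _).trans ?_
  rfl

/-- twisted module -/
def KKTw {S : Type u} [CommRing S] (𝒜 : ℕ → AddSubgroup S) [GradedRing 𝒜]
    (M : Type u) [AddCommGroup M] [Module S M] : Type u := PolynomialModule S M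

noncomputable instance {S : Type u} [CommRing S] (𝒜 : ℕ → AddSubgroup S) [GradedRing 𝒜]
    (M : Type u) [AddCommGroup M] [Module S M] : AddCommGroup (KKTw 𝒜 M) :=
  inferInstanceAs (AddCommGroup (PolynomialModule S M))

noncomputable instance {S : Type u} [CommRing S] (𝒜 : ℕ → AddSubgroup S) [GradedRing 𝒜]
    (M : Type u) [AddCommGroup M] [Module S M] : Module S (KKTw 𝒜 M) :=
  Module.compHom (PolynomialModule S M) (kkσ 𝒜)

section
variable {S : Type u} [CommRing S] (𝒜 : ℕ → AddSubgroup S) [GradedRing 𝒜]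
    (M : Type u) [AddCommGroup M] [Module S M]

/-- monomials -/
noncomputable def kkS (n : ℕ) (m : M) : KKTw 𝒜 M := (PolynomialModule.single S n m)

lemma kkS_add (n : ℕ) (m m' : M) : kkS 𝒜 M n (m + m') = kkS 𝒜 M n m + kkS 𝒜 M n m' :=
  PolynomialModule.single_add n m m'

lemma kkS_zero (n : ℕ) : kkS 𝒜 M n 0 = 0 :=
  PolynomialModule.single_zero n

lemma kkS_smul (n i : ℕ) (s : S) (hs : s ∈ 𝒜 n) (m : M) :
    s • kkS 𝒜 M i m = kkS 𝒜 M (n + i) (s • m) := by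
  change (kkσ 𝒜 s) • (PolynomialModule.single S i m) = _
  rw [kkσ_apply 𝒜 hs, PolynomialModule.monomial_smul_single]
  rfl

lemma kkTw_ind {P : KKTw 𝒜 M → Prop} (h0 : P 0) (ha : ∀ x y, P x → P y → P (x + y))
    (hs : ∀ n m, P (kkS 𝒜 M n m)) (x : KKTw 𝒜 M) : P x :=
  PolynomialModule.induction_linear (p := P) x h0 ha hs

/-- shift -/
noncomputable def kkU : KKTw 𝒜 M →ₗ[S] KKTw 𝒜 M where
  toFun x := ((Polynomial.X : Polynomial S) • (show PolynomialModule S M from x) :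
    PolynomialModule S M)
  map_add' x y := smul_add (Polynomial.X : Polynomial S) (show PolynomialModule S M from x)
    (show PolynomialModule S M from y)
  map_smul' s x := smul_comm (Polynomial.X : Polynomial S) (kkσ 𝒜 s)
    (show PolynomialModule S M from x)

lemma kkU_S (n : ℕ) (m : M) : kkU 𝒜 M (kkS 𝒜 M n m) = kkS 𝒜 M (n + 1) m := by
  change (Polynomial.X : Polynomial S) • (PolynomialModule.single S n m) = _
  rw [← Polynomial.monomial_one_one_eq_X, PolynomialModule.monomial_smul_single, add_comm, one_smul]
  rfl

lemma kkU_pow_S (n k : ℕ) (m : M) : (kkU 𝒜 M ^ k) (kkS 𝒜 M n m) = kkS 𝒜 M (n + k) m := by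
  induction k generalizing n with
  | zero => rfl
  | succ k ih => rw [pow_succ, Module.End.mul_apply, kkU_S, ih]; congr 1; omega

lemma kkU_inj (x : KKTw 𝒜 M) (h : kkU 𝒜 M x = x) : x = 0 := by
  let y : PolynomialModule S M := x
  have h' : (Polynomial.monomial 1 (1 : S)) • y = y := by
    rw [Polynomial.monomial_one_one_eq_X]; exact h
  have h2 : ∀ n, (y.coeff n : M) = 0 := by
    intro n
    have h3 : y.coeff n = ite (1 ≤ n) ((1 : S) • y.coeff (n - 1)) 0 := by
      conv_lhs => rw [← h']
      exact PolynomialModule.monomial_smul_apply 1 (1 : S) y n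
    induction n with
    | zero => simpa using h3
    | succ n ih =>
      have h4 : y.coeff n = ite (1 ≤ n) ((1 : S) • y.coeff (n - 1)) 0 := by
        conv_lhs => rw [← h']
        exact PolynomialModule.monomial_smul_apply 1 (1 : S) y n
      rw [h3]
      simpa using ih h4
  have h5 : y = 0 := by
    ext n
    exact h2 n
  exact h5

lemma kk_smul_ind {P : S → Prop} (h0 : ∀ n, ∀ s ∈ 𝒜 n, P s) (ha : ∀ x y, P x → P y → P (x + y))
    (s : S) : P s := by
  refine DirectSum.Decomposition.inductionOn 𝒜 (h0 0 0 (zero_mem _)) ?_ ?_ s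
  · intro i m; exact h0 i m m.2
  · intro x y; exact ha x y

/-- evaluation at one -/
noncomputable def kkEv : KKTw 𝒜 M →ₗ[S] M where
  toFun x := PolynomialModule.eval (1 : S) (show PolynomialModule S M from x)
  map_add' x y := map_add (PolynomialModule.eval (1 : S)) (show PolynomialModule S M from x)
    (show PolynomialModule S M from y)
  map_smul' s x := by
    change PolynomialModule.eval (1 : S) (kkσ 𝒜 s • (show PolynomialModule S M from x)) = _
    rw [PolynomialModule.eval_smul]
    congr 1
    refine kk_smul_ind 𝒜 (P := fun s => Polynomial.eval 1 (kkσ 𝒜 s) = s) ?_ ?_ s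
    · intro n s hs; rw [kkσ_apply 𝒜 hs]; simp
    · intro x y hx hy; simp [hx, hy]

lemma kkEv_S (n : ℕ) (m : M) : kkEv 𝒜 M (kkS 𝒜 M n m) = m := by
  change PolynomialModule.eval (1 : S) (PolynomialModule.single S n m) = m
  simp

lemma kkEv_iff (x : KKTw 𝒜 M) : kkEv 𝒜 M x = 0 ↔ ∃ y, y - kkU 𝒜 M y = x := by
  constructor
  · intro h
    suffices hh : ∃ y, y - kkU 𝒜 M y = x - kkS 𝒜 M 0 (kkEv 𝒜 M x) by
      obtain ⟨y, hy⟩ := hh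
      exact ⟨y, by rw [hy, h, kkS_zero, sub_zero]⟩
    clear h
    induction x using kkTw_ind with
    | h0 => exact ⟨0, by simp [kkS_zero]⟩
    | ha x y hx hy =>
      obtain ⟨a, ha⟩ := hx
      obtain ⟨b, hb⟩ := hy
      refine ⟨a + b, ?_⟩
      rw [map_add, map_add, kkS_add, add_sub_add_comm, ha, hb]; abel
    | hs n m =>
      rw [kkEv_S]
      induction n with
      | zero => exact ⟨0, by simp⟩
      | succ n ih =>
        obtain ⟨a, ha⟩ := ih
        refine ⟨a - kkS 𝒜 M n m, ?_⟩
        rw [map_sub, kkU_S, sub_sub_sub_comm, ha]; abel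
  · rintro ⟨y, rfl⟩
    induction y using kkTw_ind with
    | h0 => simp
    | ha x y hx hy =>
      rw [map_add, add_sub_add_comm, map_add, hx, hy, add_zero]
    | hs n m => rw [kkU_S, map_sub, kkEv_S, kkEv_S, sub_self]

lemma kk_van1 [Module.Finite S M] (a : S) (ha : a ∈ (HomogeneousIdeal.irrelevant 𝒜).toIdeal)
    (h : ∀ m : M, a • m = m) : GGroup.cls S M = 0 := by
  classical
  obtain ⟨g, hg⟩ := (Module.Finite.fg_top : (⊤ : Submodule S M).FG)
  obtain ⟨D, hD⟩ : ∃ D : ℕ, ∀ n ∈ (DirectSum.decompose 𝒜 a).support, n ≤ D :=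
    ⟨_, fun n hn => Finset.le_sup (f := id) hn⟩
  let T : Finset (KKTw 𝒜 M) := (Finset.range (D + 1) ×ˢ g).image (fun p => kkS 𝒜 M p.1 p.2)
  let L : Submodule S (KKTw 𝒜 M) := Submodule.span S (T : Set (KKTw 𝒜 M))
  have hmem : ∀ i m, i < D + 1 → m ∈ g → kkS 𝒜 M i m ∈ L := fun i m hi hm =>
    Submodule.subset_span (by
      simp only [T, Finset.coe_image]
      exact ⟨(i, m), by simp [hm]; omega, rfl⟩)
  have huL : ∀ x ∈ L, kkU 𝒜 M x ∈ L := by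
    intro x hx
    suffices h : L ≤ L.comap (kkU 𝒜 M) from h hx
    refine Submodule.span_le.2 ?_
    intro y hy
    simp only [T, Finset.coe_image, Set.mem_image] at hy
    obtain ⟨⟨i, m⟩, him, rfl⟩ := hy
    simp at him
    obtain ⟨hi, hm⟩ := him
    change kkU 𝒜 M (kkS 𝒜 M i m) ∈ L
    rw [kkU_S]
    by_cases hiD : i < D
    · exact hmem _ _ (by omega) hm
    have hi' : i = D := by omega
    subst hi'
    have e1 : kkS 𝒜 M (i + 1) m = ∑ n ∈ (DirectSum.decompose 𝒜 a).support,
        kkS 𝒜 M (i + 1) (((DirectSum.decompose 𝒜 a) n : S) • m) := by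
      have : kkS 𝒜 M (i + 1) m = kkS 𝒜 M (i + 1) (a • m) := by rw [h m]
      rw [this]
      nth_rewrite 1 [← DirectSum.sum_support_decompose 𝒜 a]
      rw [Finset.sum_smul]
      exact map_sum (PolynomialModule.lsingle S (i + 1) : M →ₗ[S] PolynomialModule S M) _ _
    rw [e1]
    refine Submodule.sum_mem _ fun n hn => ?_
    have hn1 := hD n hn
    have hn0 : n ≠ 0 := by
      rintro rfl
      rw [DFinsupp.mem_support_iff] at hn
      apply hn
      have := (HomogeneousIdeal.mem_irrelevant_iff 𝒜 a).1 ha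
      apply Subtype.ext
      simpa [GradedRing.proj_apply] using this
    have e2 := kkS_smul 𝒜 M n (i + 1 - n) _ (DirectSum.decompose 𝒜 a n).2 m
    rw [show n + (i + 1 - n) = i + 1 by omega] at e2
    rw [← e2]
    exact L.smul_mem _ (hmem _ _ (by omega) hm)
  have hpL : ∀ k, ∀ x ∈ L, (kkU 𝒜 M ^ k) x ∈ L := by
    intro k
    induction k with
    | zero => intro x hx; simpa using hx
    | succ k ih => intro x hx; rw [pow_succ]; exact ih _ (huL x hx)
  have hS : ∀ i, ∀ m ∈ g, kkS 𝒜 M i m ∈ L := by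
    intro i m hm
    have := hpL i _ (hmem 0 m (by omega) hm)
    rwa [kkU_pow_S, zero_add] at this
  refine kk_vanish (kkU 𝒜 M) (kkEv 𝒜 M) L ⟨T, rfl⟩ huL (kkU_inj 𝒜 M) (kkEv_iff 𝒜 M) ?_ ?_
  · have hadd : ∀ x y, (∃ k, (kkU 𝒜 M ^ k) x ∈ L) → (∃ k, (kkU 𝒜 M ^ k) y ∈ L) →
        ∃ k, (kkU 𝒜 M ^ k) (x + y) ∈ L := by
      rintro x y ⟨k, hk⟩ ⟨l, hl⟩
      refine ⟨k + l, ?_⟩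
      rw [map_add]
      refine L.add_mem ?_ ?_
      · rw [add_comm, pow_add]; exact hpL _ _ hk
      · rw [pow_add]; exact hpL _ _ hl
    intro y
    induction y using kkTw_ind with
    | h0 => exact ⟨0, by simp⟩
    | ha x y hx hy => exact hadd x y hx hy
    | hs n m =>
      have hm : m ∈ Submodule.span S (g : Set M) := by rw [hg]; trivial
      induction hm using Submodule.span_induction with
      | mem m hm => exact ⟨0, hS n m hm⟩
      | zero => exact ⟨0, by simp [kkS_zero]⟩
      | add x y _ _ hx hy => rw [kkS_add]; exact hadd _ _ hx hy
      | smul s x _ hx =>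
        induction s using kk_smul_ind 𝒜 with
        | h0 d s hs =>
          obtain ⟨k, hk⟩ := hx
          refine ⟨d + k, ?_⟩
          rw [kkU_pow_S] at hk ⊢
          rw [show n + (d + k) = d + (n + k) by omega, ← kkS_smul 𝒜 M d _ s hs]
          exact L.smul_mem _ hk
        | ha s t hs ht => rw [add_smul, kkS_add]; exact hadd _ _ hs ht
  · intro m
    have : (⊤ : Submodule S M) ≤ L.map (kkEv 𝒜 M) := by
      rw [← hg]
      refine Submodule.span_le.2 fun m hm => ⟨_, hS 0 m hm, kkEv_S 𝒜 M 0 m⟩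
    exact this trivial

lemma kk_van2 (hfield : IsField (𝒜 0)) [Module.Finite S M]
    (h : ∀ m : M, ∃ s, s ∉ (HomogeneousIdeal.irrelevant 𝒜).toIdeal ∧ s • m = 0)
    [hprime : (HomogeneousIdeal.irrelevant 𝒜).toIdeal.IsPrime] : GGroup.cls S M = 0 := by
  classical
  obtain ⟨g, hg⟩ := (Module.Finite.fg_top : (⊤ : Submodule S M).FG)
  choose c hc hcm using h
  have hs : (∏ x ∈ g, c x) ∉ (HomogeneousIdeal.irrelevant 𝒜).toIdeal := by
    rw [hprime.prod_mem_iff]; rintro ⟨x, -, hx⟩; exact hc x hx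
  have hsm : ∀ m : M, (∏ x ∈ g, c x) • m = 0 := by
    intro m
    have hm : m ∈ Submodule.span S (g : Set M) := by rw [hg]; trivial
    induction hm using Submodule.span_induction with
    | mem m hm =>
      rw [← Finset.prod_erase_mul g c hm, mul_smul, hcm, smul_zero]
    | zero => simp
    | add x y _ _ hx hy => rw [smul_add, hx, hy, add_zero]
    | smul s x _ hx => rw [smul_comm, hx, smul_zero]
  generalize (∏ x ∈ g, c x) = s at hs hsm
  have h0 : DirectSum.decompose 𝒜 s 0 ≠ 0 := by
    intro h0
    apply hs
    change s ∈ HomogeneousIdeal.irrelevant 𝒜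
    rw [HomogeneousIdeal.mem_irrelevant_iff, GradedRing.proj_apply, h0]; rfl
  obtain ⟨b, hb⟩ := hfield.mul_inv_cancel h0
  have hb' : ((DirectSum.decompose 𝒜 s 0 : 𝒜 0) : S) * (b : S) = 1 := by
    have := congrArg (fun x : 𝒜 0 => (x : S)) hb
    simpa using this
  refine kk_van1 𝒜 M (1 - s * b) ?_ ?_
  · change _ ∈ HomogeneousIdeal.irrelevant 𝒜
    rw [HomogeneousIdeal.mem_irrelevant_iff, GradedRing.proj_apply, DirectSum.decompose_sub]
    rw [DirectSum.sub_apply, AddSubgroupClass.coe_sub,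
      DirectSum.coe_decompose_mul_of_right_mem_zero 𝒜 b.2, hb',
      DirectSum.decompose_of_mem_same 𝒜 (SetLike.GradedOne.one_mem), sub_self]
  · intro m
    rw [sub_smul, one_smul, mul_comm, mul_smul, hsm, smul_zero, sub_zero]
end

section lat
variable {S : Type u} [CommRing S] (p : Ideal S) [p.IsPrime]

/-- lattices -/
def KKLat {N : Type u} [AddCommGroup N] [Module S N] (M : Submodule S N) : Prop :=
  M.FG ∧ ∀ x : N, ∃ s, s ∉ p ∧ s • x ∈ M

/-- vanishing hypothesis -/
def KKVan : Prop := ∀ (M : Type u) [AddCommGroup M] [Module S M] [Module.Finite S M],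
  (∀ m : M, ∃ s, s ∉ p ∧ s • m = 0) → GGroup.cls S M = 0

variable {p}

lemma kk_lat_le (hv : KKVan p) {N : Type u} [AddCommGroup N] [Module S N] {M M' : Submodule S N}
    (hM : ∀ x : N, ∃ s, s ∉ p ∧ s • x ∈ M) [Module.Finite S M] [Module.Finite S M'] (h : M ≤ M') :
    GGroup.cls S M = GGroup.cls S M' := by
  have h0 : GGroup.cls S (M' ⧸ (LinearMap.range (Submodule.inclusion h))) = 0 := by
    apply hv
    intro m
    obtain ⟨x, rfl⟩ := Submodule.mkQ_surjective _ m
    obtain ⟨s, hs, hx⟩ := hM x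
    refine ⟨s, hs, ?_⟩
    rw [← map_smul, ← LinearMap.mem_ker, Submodule.ker_mkQ]
    exact ⟨⟨s • x, hx⟩, rfl⟩
  have := kk_cls_exact (Submodule.inclusion h)
    (Submodule.mkQ (LinearMap.range (Submodule.inclusion h)))
    (Submodule.inclusion_injective h) (Submodule.mkQ_surjective _) (Submodule.ker_mkQ _).symm
  rw [this, h0, add_zero]

lemma kk_lat_eq (hv : KKVan p) {N : Type u} [AddCommGroup N] [Module S N] {M M' : Submodule S N}
    (hM : KKLat p M) (hM' : KKLat p M') [Module.Finite S M] [Module.Finite S M'] :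
    GGroup.cls S M = GGroup.cls S M' := by
  have : Module.Finite S (M ⊔ M' : Submodule S N) := Module.Finite.iff_fg.2 (hM.1.sup hM'.1)
  rw [kk_lat_le hv hM.2 (le_sup_left : M ≤ M ⊔ M'),
    kk_lat_le hv hM'.2 (le_sup_right : M' ≤ M ⊔ M')]

lemma kk_lat_exists (N : Type u) [AddCommGroup N] [Module S N]
    [Module (Localization.AtPrime p) N] [IsScalarTower S (Localization.AtPrime p) N]
    [Module.Finite (Localization.AtPrime p) N] : ∃ M : Submodule S N, KKLat p M := by
  obtain ⟨g, hg⟩ := (Module.Finite.fg_top : (⊤ : Submodule (Localization.AtPrime p) N).FG)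
  refine ⟨Submodule.span S g, ⟨g, rfl⟩, fun x => ?_⟩
  obtain ⟨t, ht⟩ := multiple_mem_span_of_mem_localization_span p.primeCompl
    (Localization.AtPrime p) (g : Set N) x (by rw [hg]; trivial)
  exact ⟨t, t.2, ht⟩

/-- restricted module structure -/
@[reducible] def kkRes (N : FGModuleRep (Localization.AtPrime p)) : Module S N.carrier :=
  Module.compHom N.carrier (algebraMap S (Localization.AtPrime p))

lemma kkRes_tower (N : FGModuleRep (Localization.AtPrime p)) :
    letI := kkRes N; IsScalarTower S (Localization.AtPrime p) N.carrier := by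
  letI := kkRes N
  exact IsScalarTower.of_algebraMap_smul fun r x => rfl

lemma kkOf_ex (N : FGModuleRep (Localization.AtPrime p)) : letI := kkRes N;
    ∃ c : GGroup S, ∃ (M : Submodule S N.carrier) (_ : Module.Finite S M), KKLat p M ∧
      c = GGroup.cls S M := by
  letI := kkRes N
  haveI := kkRes_tower N
  obtain ⟨M, hM⟩ := kk_lat_exists (p := p) N.carrier
  exact ⟨_, M, Module.Finite.iff_fg.2 hM.1, hM, rfl⟩

/-- the class of a lattice -/
noncomputable def kkOf (N : FGModuleRep (Localization.AtPrime p)) : GGroup S :=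
  Classical.choose (kkOf_ex N)

lemma kkOf_eq (hv : KKVan p) (N : Type u) [AddCommGroup N] [i : Module S N]
    [Module (Localization.AtPrime p) N] [IsScalarTower S (Localization.AtPrime p) N]
    [Module.Finite (Localization.AtPrime p) N] (M : Submodule S N) [Module.Finite S M]
    (hM : KKLat p M) : kkOf (p := p) ⟨N⟩ = GGroup.cls S M := by
  have hi : i = kkRes (p := p) ⟨N⟩ := by
    apply Module.ext'
    intro r x
    exact (algebraMap_smul (Localization.AtPrime p) r x).symm
  subst hi
  obtain ⟨M', h1, h2, h3⟩ := Classical.choose_spec (kkOf_ex (p := p) ⟨N⟩)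
  rw [kkOf]
  refine h3.trans ?_
  letI : Module S N := kkRes (p := p) ⟨N⟩
  exact kk_lat_eq (N := N) hv h2 hM

lemma kkOf_add [IsNoetherianRing S] (hv : KKVan p) (N₁ N₂ N₃ : FGModuleRep (Localization.AtPrime p))
    (f : N₁.carrier →ₗ[Localization.AtPrime p] N₂.carrier)
    (g : N₂.carrier →ₗ[Localization.AtPrime p] N₃.carrier)
    (hf : Function.Injective f) (hg : Function.Surjective g)
    (h : LinearMap.range f = LinearMap.ker g) : kkOf N₂ = kkOf N₁ + kkOf N₃ := by
  letI := kkRes N₁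
  letI := kkRes N₂
  letI := kkRes N₃
  haveI := kkRes_tower N₁
  haveI := kkRes_tower N₂
  haveI := kkRes_tower N₃
  let f' := f.restrictScalars S
  let g' := g.restrictScalars S
  obtain ⟨M, hM⟩ := kk_lat_exists (p := p) N₂.carrier
  haveI : Module.Finite S M := Module.Finite.iff_fg.2 hM.1
  have hmap : ∀ x : M.comap f', f' x ∈ M := fun x => x.2
  let F : M.comap f' →ₗ[S] M := f'.restrict (fun x hx => hx)
  have hF : Function.Injective F := fun x y hxy => Subtype.ext (hf (congrArg Subtype.val hxy))
  haveI : Module.Finite S (M.comap f') := Module.Finite.of_injective F hF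
  haveI : Module.Finite S (M.map g') := Module.Finite.iff_fg.2 (hM.1.map g')
  have h1 : KKLat p (M.comap f') := ⟨Module.Finite.iff_fg.1 inferInstance, fun x => by
    obtain ⟨s, hs, hx⟩ := hM.2 (f' x)
    exact ⟨s, hs, by rw [Submodule.mem_comap, map_smul]; exact hx⟩⟩
  have h3 : KKLat p (M.map g') := ⟨hM.1.map g', fun x => by
    obtain ⟨y, rfl⟩ := hg x
    obtain ⟨s, hs, hx⟩ := hM.2 y
    exact ⟨s, hs, ⟨s • y, hx, map_smul g' s y⟩⟩⟩
  rw [show kkOf N₁ = _ from kkOf_eq hv N₁.carrier _ h1, show kkOf N₂ = _ from kkOf_eq hv N₂.carrier _ hM,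
    show kkOf N₃ = _ from kkOf_eq hv N₃.carrier _ h3]
  refine kk_cls_exact F (g'.restrict (p := M) (q := M.map g') (fun x hx => ⟨x, hx, rfl⟩)) hF ?_ ?_
  · rintro ⟨_, x, hx, rfl⟩
    exact ⟨⟨x, hx⟩, rfl⟩
  · ext x
    constructor
    · rintro ⟨y, rfl⟩
      have : f y ∈ LinearMap.ker g := h ▸ ⟨y, rfl⟩
      exact Subtype.ext this
    · intro hx
      have hx' : (x : N₂.carrier) ∈ LinearMap.ker g := congrArg Subtype.val hx
      rw [← h] at hx'
      obtain ⟨y, hy⟩ := hx'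
      exact ⟨⟨y, by rw [Submodule.mem_comap]; change f y ∈ M; rw [hy]; exact x.2⟩, Subtype.ext hy⟩

variable (p) in
/-- localization map -/
noncomputable def kkLoc : GGroup S →+ GGroup (Localization.AtPrime p) :=
  kkLift (fun M => GGroup.cls (Localization.AtPrime p) (Localization.AtPrime p ⊗[S] M.carrier))
    (fun M₁ M₂ M₃ f g hf hg h => by
      refine kk_cls_exact (f.baseChange (Localization.AtPrime p))
        (g.baseChange (Localization.AtPrime p)) ?_ ?_ ?_
      · exact Module.Flat.lTensor_preserves_injective_linearMap f hf
      · exact LinearMap.lTensor_surjective _ hg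
      · have := lTensor_exact (Localization.AtPrime p) (f := f) (g := g)
          (LinearMap.exact_iff.2 h.symm) hg
        ext x
        rw [LinearMap.mem_ker]
        exact (this x).symm)

lemma kk_iso [IsNoetherianRing S] (hv : KKVan p) :
    ∃ φ : GGroup S ≃+ GGroup (Localization.AtPrime p),
      ∀ (M : Type u) [AddCommGroup M] [Module S M] [Module.Finite S M],
        φ (GGroup.cls S M) =
          GGroup.cls (Localization.AtPrime p) (Localization.AtPrime p ⊗[S] M) := by
  let ψ : GGroup (Localization.AtPrime p) →+ GGroup S := kkLift kkOf (kkOf_add hv)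
  refine ⟨AddMonoidHom.toAddEquiv (kkLoc p) ψ ?_ ?_, ?_⟩
  · apply kk_ext
    intro M _ _ _
    rw [AddMonoidHom.comp_apply, kkLoc, kkLift_cls]
    simp only [ψ]
    rw [kkLift_cls]
    let ι : M →ₗ[S] Localization.AtPrime p ⊗[S] M := TensorProduct.mk S (Localization.AtPrime p) M 1
    have hι : IsLocalizedModule p.primeCompl ι :=
      (isLocalizedModule_iff_isBaseChange p.primeCompl (Localization.AtPrime p) ι).2
        (TensorProduct.isBaseChange S M (Localization.AtPrime p))
    have hl : KKLat p (LinearMap.range ι) := by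
      refine ⟨Module.Finite.iff_fg.1 inferInstance, fun x => ?_⟩
      obtain ⟨⟨m, s⟩, hx⟩ := IsLocalizedModule.surj p.primeCompl ι x
      exact ⟨s, s.2, ⟨m, hx.symm⟩⟩
    rw [kkOf_eq hv _ (LinearMap.range ι) hl]
    have h0 : GGroup.cls S (LinearMap.ker ι) = 0 := by
      apply hv
      intro m
      obtain ⟨c, hc⟩ := (IsLocalizedModule.eq_zero_iff p.primeCompl ι).1 m.2
      exact ⟨c, c.2, Subtype.ext hc⟩
    have := kk_cls_exact (M₂ := M) (M₃ := LinearMap.range ι) (LinearMap.ker ι).subtype ι.rangeRestrict (Subtype.val_injective)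
      ι.surjective_rangeRestrict (by rw [Submodule.range_subtype, LinearMap.ker_rangeRestrict])
    rw [h0, zero_add] at this
    exact this.symm
  · apply kk_ext
    intro N _ _ _
    rw [AddMonoidHom.comp_apply]
    simp only [ψ]
    rw [kkLift_cls]
    letI : Module S N := kkRes (p := p) ⟨N⟩
    haveI : IsScalarTower S (Localization.AtPrime p) N := kkRes_tower (p := p) ⟨N⟩
    obtain ⟨M, hM⟩ := kk_lat_exists (p := p) N
    haveI : Module.Finite S M := Module.Finite.iff_fg.2 hM.1
    rw [kkOf_eq hv N M hM, kkLoc, kkLift_cls]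
    have hl : IsLocalizedModule p.primeCompl M.subtype := by
      refine ⟨fun s => ?_, fun y => ?_, fun {x y} hxy => ⟨1, ?_⟩⟩
      · have h2 := (IsLocalization.map_units (Localization.AtPrime p) s).map
          (algebraMap (Localization.AtPrime p) (Module.End (Localization.AtPrime p) N))
        rw [Module.End.isUnit_iff] at h2 ⊢
        convert h2 using 1
        ext x
        simp [Module.algebraMap_end_apply]
      · obtain ⟨s, hs, hx⟩ := hM.2 y
        exact ⟨(⟨s • y, hx⟩, ⟨s, hs⟩), rfl⟩
      · rw [Subtype.ext hxy]
    have hb := (isLocalizedModule_iff_isBaseChange p.primeCompl (Localization.AtPrime p) M.subtype).1 hl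
    exact kk_cls_equiv hb.equiv
  · intro M _ _ _
    rw [AddMonoidHom.toAddEquiv_apply]
    rw [kkLoc, kkLift_cls]

end lat

end KK

/-- **Kamoi–Kurano** (Proposition 2.3).  Let `S = ⊕_{n ≥ 0} Sₙ` be a commutative Noetherian
`ℕ`-graded ring whose degree-zero part `S₀` is a field, let `S₊ = ⊕_{n > 0} Sₙ` be the
irrelevant (maximal, hence prime) ideal, and let `A = S_{S₊}`.  Then the map
`G(S) → G(A)`, `[M] ↦ [A ⊗_S M] = [M_{S₊}]`, induced by localization is an isomorphism of
Grothendieck groups. -/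
theorem kamoi_kurano_localization_iso
    (S : Type u) [CommRing S] [IsNoetherianRing S]
    (𝒜 : ℕ → AddSubgroup S) [GradedRing 𝒜]
    (hfield : IsField (𝒜 0))
    [hprime : (HomogeneousIdeal.irrelevant 𝒜).toIdeal.IsPrime] :
    ∃ φ : GGroup S ≃+ GGroup (Localization.AtPrime (HomogeneousIdeal.irrelevant 𝒜).toIdeal),
      ∀ (M : Type u) [AddCommGroup M] [Module S M] [Module.Finite S M],
        φ (GGroup.cls S M) =
          GGroup.cls (Localization.AtPrime (HomogeneousIdeal.irrelevant 𝒜).toIdeal)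
            (Localization.AtPrime (HomogeneousIdeal.irrelevant 𝒜).toIdeal ⊗[S] M) := by
  exact kk_iso (fun M _ _ _ h => kk_van2 𝒜 M hfield h)
end

section
/- Let R̂ = ℝ[[x,y,z,w]]/(x² + y² − (w+1)z²), let α ∈ R̂ be a unit with α² = w + 1, and let Q = (x, y − αz)R̂. Then Q is a prime ideal of R̂ of height 1, and (x,y,z)R̂ = Q + (y + αz)R̂. -/
/-!
Statement 8: in `R̂ = ℝ[[x,y,z,w]]/(x² + y² − (w+1)z²)`, for a unit `α` with `α² = w + 1`, the
ideal `Q = (x, y − αz)` is a prime of height `1`, and `(x,y,z)R̂ = Q + (y + αz)R̂`.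
-/
noncomputable section

open MvPowerSeries

/-- The power series `x² + y² − (w+1)z² ∈ ℝ[[x,y,z,w]]`
(with `x = X 0`, `y = X 1`, `z = X 2`, `w = X 3`). -/
def quadSeries : MvPowerSeries (Fin 4) ℝ :=
  X 0 ^ 2 + X 1 ^ 2 - (X 3 + 1) * X 2 ^ 2

/-- The complete local ring `R̂ = ℝ[[x,y,z,w]]/(x² + y² − (w+1)z²)`. -/
def Rhat : Type := MvPowerSeries (Fin 4) ℝ ⧸ Ideal.span {quadSeries}

instance : CommRing Rhat := by unfold Rhat; infer_instance

/-- The images `x`, `y`, `z`, `w` of the four variables in `R̂`. -/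
def xh : Rhat := Ideal.Quotient.mk _ (X 0)
def yh : Rhat := Ideal.Quotient.mk _ (X 1)
def zh : Rhat := Ideal.Quotient.mk _ (X 2)
def wh : Rhat := Ideal.Quotient.mk _ (X 3)

/-- The ideal `P R̂ = (x, y, z)` of `R̂`. -/
def Phat : Ideal Rhat := Ideal.span {xh, yh, zh}


abbrev AA (n : ℕ) := MvPowerSeries (Fin n) ℝ

def mkR : AA 4 →+* Rhat := Ideal.Quotient.mk (Ideal.span {quadSeries})

lemma mkR_surj : Function.Surjective mkR := Ideal.Quotient.mk_surjective

lemma mkR_eq_zero (a : AA 4) : mkR a = 0 ↔ quadSeries ∣ a := by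
  rw [← Ideal.mem_span_singleton]
  exact Ideal.Quotient.eq_zero_iff_mem

def pr (n : ℕ) : AA (n + 1) →+* AA n :=
  PowerSeries.constantCoeff.comp (MvPowerSeries.finSuccEquiv ℝ n).toRingEquiv.toRingHom

lemma pr_zero (n : ℕ) : pr n (X 0) = 0 := by
  simp [pr]

lemma pr_succ (n : ℕ) (j : Fin n) : pr n (X j.succ) = X j := by
  simp [pr]

lemma pr_eq_zero (n : ℕ) (a : AA (n + 1)) : pr n a = 0 ↔ X 0 ∣ a := by
  constructor
  · intro h
    have h1 : PowerSeries.X ∣ MvPowerSeries.finSuccEquiv ℝ n a := by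
      rw [PowerSeries.X_dvd_iff]; exact h
    rw [← MvPowerSeries.finSuccEquiv_X_zero] at h1
    exact (map_dvd_iff (MvPowerSeries.finSuccEquiv ℝ n)).1 h1
  · rintro ⟨b, rfl⟩
    rw [map_mul, pr_zero, zero_mul]

/-- section of `pr` -/
def sec (n : ℕ) : AA n →+* AA (n + 1) :=
  (MvPowerSeries.finSuccEquiv ℝ n).symm.toRingEquiv.toRingHom.comp PowerSeries.C

lemma pr_sec (n : ℕ) (a : AA n) : pr n (sec n a) = a := by
  simp [pr, sec]

lemma sec_X (n : ℕ) (j : Fin n) : sec n (X j) = X j.succ := by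
  simp [sec, AlgEquiv.symm_apply_eq]

lemma exists_sqrt : ∃ u : PowerSeries ℝ, u ^ 2 = PowerSeries.X + 1 := by
  refine ⟨PowerSeries.binomialSeries ℝ (1/2 : ℚ), ?_⟩
  rw [pow_two, ← PowerSeries.binomialSeries_add]
  have := PowerSeries.binomialSeries_nat (R := ℚ) (A := ℝ) 1
  norm_num at this ⊢
  rw [this, add_comm]

section shift
variable (t : AA 3)

def shv : Fin 3 → AA 3 := ![X 0 + t * X 1, X 1, X 2]

lemma shv_hs : MvPowerSeries.HasSubst (shv t) := by
  apply MvPowerSeries.hasSubst_of_constantCoeff_zero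
  intro i
  fin_cases i <;> simp [shv]

def sh : AA 3 →ₐ[ℝ] AA 3 := MvPowerSeries.substAlgHom (shv_hs t)

lemma sh_X (i : Fin 3) : sh t (X i) = shv t i := by
  rw [sh, MvPowerSeries.substAlgHom_X]

end shift

lemma sh_fix (t : AA 3) (u : PowerSeries ℝ) :
    sh t (u.toMvPowerSeries 2) = u.toMvPowerSeries 2 := by
  rw [sh, MvPowerSeries.substAlgHom_apply, PowerSeries.subst_toMvPowerSeries (shv_hs t),
    PowerSeries.toMvPowerSeries_eq_subst]
  simp [shv]

lemma sh_sh (u : PowerSeries ℝ) (a : AA 3) :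
    sh (-(u.toMvPowerSeries 2)) (sh (u.toMvPowerSeries 2) a) = a := by
  set t := u.toMvPowerSeries (2 : Fin 3) with ht
  have h1 : sh (-t) t = t := sh_fix _ _
  have h := MvPowerSeries.substAlgHom_comp_substAlgHom_apply (R := ℝ) (shv_hs t) (shv_hs (-t)) a
  rw [sh, sh]
  rw [h, MvPowerSeries.substAlgHom_apply]
  have : (fun s => MvPowerSeries.substAlgHom (R := ℝ) (shv_hs (-t)) (shv t s)) = MvPowerSeries.X := by
    funext i
    change sh (-t) _ = _
    fin_cases i
    · simp [shv, sh_X, h1]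
    · simp [shv, sh_X]
    · simp [shv, sh_X]
  rw [this, MvPowerSeries.subst_self]; rfl

/-- `A → ℝ[[z,w]]`, with `x ↦ 0`, `y ↦ t z`. -/
def Phi (t : AA 3) : AA 4 →+* AA 2 :=
  (pr 2).comp ((sh t : AA 3 →+* AA 3).comp (pr 3))

lemma pr3_quad : pr 3 quadSeries = X 0 ^ 2 - (X 2 + 1) * X 1 ^ 2 := by
  have h1 : pr 3 (X 1) = X 0 := pr_succ 3 0
  have h2 : pr 3 (X 2) = X 1 := pr_succ 3 1
  have h3 : pr 3 (X 3) = X 2 := pr_succ 3 2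
  simp [quadSeries, pr_zero, h1, h2, h3]

lemma w1_ne : (X 1 + 1 : AA 2) ≠ 0 := by
  intro h
  have := congrArg MvPowerSeries.constantCoeff h
  simp at this

lemma z_ne : (X 0 : AA 2) ≠ 0 := by
  intro h
  have := congrArg (MvPowerSeries.coeff (Finsupp.single 0 1)) h
  simp [MvPowerSeries.coeff_X] at this

lemma pr3_quad_ne : pr 3 quadSeries ≠ 0 := by
  rw [pr3_quad]
  intro h
  have h1 : pr 2 (X 1) = X 0 := pr_succ 2 0
  have h2 : pr 2 (X 2) = X 1 := pr_succ 2 1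
  have h' := congrArg (pr 2) h
  simp only [map_sub, map_mul, map_pow, map_add, map_one, pr_zero, h1, h2, map_zero] at h'
  have : (X 1 + 1 : AA 2) * X 0 ^ 2 = 0 := by linear_combination -h'
  exact mul_ne_zero w1_ne (pow_ne_zero 2 z_ne) this

lemma xh_regular (r : Rhat) (h : xh * r = 0) : r = 0 := by
  obtain ⟨a, rfl⟩ := mkR_surj r
  have hx : xh = mkR (X 0) := rfl
  rw [hx, ← map_mul, mkR_eq_zero] at h
  obtain ⟨b, hb⟩ := h
  have h1 : pr 3 quadSeries * pr 3 b = 0 := by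
    rw [← map_mul, ← hb, map_mul, pr_zero, zero_mul]
  have h2 := (mul_eq_zero.1 h1).resolve_left pr3_quad_ne
  obtain ⟨c, rfl⟩ := (pr_eq_zero 3 b).1 h2
  rw [mkR_eq_zero]
  have hX : (X 0 : AA 4) ≠ 0 := by
    intro h
    have := congrArg (MvPowerSeries.coeff (Finsupp.single 0 1)) h
    simp [MvPowerSeries.coeff_X] at this
  refine ⟨c, mul_left_cancel₀ hX ?_⟩
  rw [hb]; ring

instance : IsNoetherianRing Rhat :=
  isNoetherianRing_of_surjective (AA 4) Rhat mkR mkR_surj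

lemma two_unit : IsUnit (2 : Rhat) := by
  have : (2 : Rhat) = mkR (MvPowerSeries.C 2) := by
    rw [map_ofNat, map_ofNat]
  rw [this]
  exact (IsUnit.map MvPowerSeries.C (by norm_num : IsUnit (2:ℝ))).map mkR

/-- every square root of `w+1` in `Rhat` comes from a univariate power series -/
lemma alpha_lift (α : Rhat) (hsq : α ^ 2 = wh + 1) :
    ∃ u : PowerSeries ℝ, u ^ 2 = PowerSeries.X + 1 ∧ α = mkR (sec 3 (u.toMvPowerSeries 2)) := by
  obtain ⟨u, hu⟩ := exists_sqrt
  obtain ⟨a, rfl⟩ := mkR_surj α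
  set s : AA 4 := sec 3 (u.toMvPowerSeries 2) with hs
  have hs2 : s ^ 2 = X 3 + 1 := by
    rw [hs, ← map_pow, ← map_pow, hu, map_add, map_one, map_add, map_one,
      PowerSeries.toMvPowerSeries_X, sec_X]
    rfl
  have hw : wh = mkR (X 3) := rfl
  have hz : (mkR a - mkR s) * (mkR a + mkR s) = 0 := by
    have : mkR s ^ 2 = wh + 1 := by rw [← map_pow, hs2, map_add, map_one, hw]
    linear_combination hsq - this
  have hc : MvPowerSeries.constantCoeff s ≠ 0 := by
    intro h
    have := congrArg MvPowerSeries.constantCoeff hs2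
    simp [h] at this
  have : MvPowerSeries.constantCoeff (a + s) ≠ 0 ∨ MvPowerSeries.constantCoeff (a - s) ≠ 0 := by
    by_contra! h
    rw [map_add, map_sub] at h
    exact hc (by linarith [h.1, h.2])
  rcases this with h | h
  · refine ⟨u, hu, ?_⟩
    have hun : IsUnit (mkR (a + s)) :=
      (MvPowerSeries.isUnit_iff_constantCoeff.2 h.isUnit).map mkR
    rw [map_add] at hun
    exact sub_eq_zero.1 (hun.mul_left_eq_zero.1 hz)
  · refine ⟨-u, by rw [neg_sq, hu], ?_⟩
    have hun : IsUnit (mkR (a - s)) :=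
      (MvPowerSeries.isUnit_iff_constantCoeff.2 h.isUnit).map mkR
    rw [map_sub] at hun
    rw [map_neg, map_neg, map_neg]
    exact eq_neg_of_add_eq_zero_left (hun.mul_right_eq_zero.1 hz)

section main
variable (u : PowerSeries ℝ)

lemma Phi_vals : Phi (u.toMvPowerSeries 2) (X 0) = 0 ∧
    Phi (u.toMvPowerSeries 2) (X 1) =
      Phi (u.toMvPowerSeries 2) (sec 3 (u.toMvPowerSeries 2)) * X 0 ∧
    Phi (u.toMvPowerSeries 2) (X 2) = X 0 ∧ Phi (u.toMvPowerSeries 2) (X 3) = X 1 := by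
  have h1 : pr 3 (X 1) = X 0 := pr_succ 3 0
  have h2 : pr 3 (X 2) = X 1 := pr_succ 3 1
  have h3 : pr 3 (X 3) = X 2 := pr_succ 3 2
  have h1' : pr 2 (X 1) = X 0 := pr_succ 2 0
  have h2' : pr 2 (X 2) = X 1 := pr_succ 2 1
  refine ⟨?_, ?_, ?_, ?_⟩
  · simp [Phi, pr_zero]
  · simp [Phi, h1, pr_sec, sh_fix, sh_X, shv, pr_zero, h1']
  · simp [Phi, h2, sh_X, shv, h1']
  · simp [Phi, h3, sh_X, shv, h2']

lemma Phi_s (hu : u ^ 2 = PowerSeries.X + 1) :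
    Phi (u.toMvPowerSeries 2) (sec 3 (u.toMvPowerSeries 2)) ^ 2 = X 1 + 1 := by
  rw [← map_pow, ← map_pow, ← map_pow, hu, map_add, map_one, map_add, map_one, map_add, map_one,
      PowerSeries.toMvPowerSeries_X, sec_X]
  rw [← (Phi_vals u).2.2.2]; rfl

lemma Phi_ker (a : AA 4) (ha : Phi (u.toMvPowerSeries 2) a = 0) :
    a ∈ Ideal.span {X 0, X 1 - sec 3 (u.toMvPowerSeries 2) * X 2} := by
  set t := u.toMvPowerSeries (2 : Fin 3) with ht
  have h1 : pr 2 (sh t (pr 3 a)) = 0 := ha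
  obtain ⟨k, hk⟩ := (pr_eq_zero 2 _).1 h1
  have h2 : pr 3 a = (X 0 - t * X 1) * sh (-t) k := by
    have := sh_sh u (pr 3 a)
    rw [← ht, hk, map_mul, sh_X] at this
    rw [← this]; simp [shv]; left; ring
  have e1 : pr 3 (X 1) = X 0 := pr_succ 3 0
  have e2 : pr 3 (X 2) = X 1 := pr_succ 3 1
  have h3 : pr 3 (a - (X 1 - sec 3 t * X 2) * sec 3 (sh (-t) k)) = 0 := by
    rw [map_sub, map_mul, map_sub, map_mul, pr_sec, pr_sec, e1, e2, h2, sub_self]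
  obtain ⟨c, hc⟩ := (pr_eq_zero 3 _).1 h3
  rw [Ideal.mem_span_pair]
  exact ⟨c, sec 3 (sh (-t) k), by linear_combination -hc⟩

lemma Phi_quad (hu : u ^ 2 = PowerSeries.X + 1) : Phi (u.toMvPowerSeries 2) quadSeries = 0 := by
  obtain ⟨a, b, c, d⟩ := Phi_vals u
  have e := Phi_s u hu
  rw [quadSeries, map_sub, map_add, map_mul, map_add, map_pow, map_pow, map_pow, map_one,
    a, b, c, d]
  linear_combination (X 0)^2 * e

def PhiHat (hu : u ^ 2 = PowerSeries.X + 1) : Rhat →+* AA 2 :=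
  Ideal.Quotient.lift (Ideal.span {quadSeries}) (Phi (u.toMvPowerSeries 2)) (by
    intro a ha
    obtain ⟨b, rfl⟩ := Ideal.mem_span_singleton.1 ha
    rw [map_mul, Phi_quad u hu, zero_mul])

lemma PhiHat_mk (hu : u ^ 2 = PowerSeries.X + 1) (a : AA 4) :
    PhiHat u hu (mkR a) = Phi (u.toMvPowerSeries 2) a := rfl

lemma Q_eq_ker (hu : u ^ 2 = PowerSeries.X + 1) :
    Ideal.span {xh, yh - mkR (sec 3 (u.toMvPowerSeries 2)) * zh} = RingHom.ker (PhiHat u hu) := by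
  have hx : xh = mkR (X 0) := rfl
  have hy : yh = mkR (X 1) := rfl
  have hz : zh = mkR (X 2) := rfl
  obtain ⟨a, b, c, d⟩ := Phi_vals u
  rw [hx, hy, hz]
  apply le_antisymm
  · rw [Ideal.span_le, Set.insert_subset_iff, Set.singleton_subset_iff]
    constructor
    · change PhiHat u hu _ = 0
      rw [PhiHat_mk, a]
    · change PhiHat u hu _ = 0
      rw [← map_mul, ← map_sub, PhiHat_mk, map_sub, map_mul, b, c, sub_self]
  · intro r hr
    obtain ⟨p, rfl⟩ := mkR_surj r
    have := Phi_ker u p hr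
    rw [Ideal.mem_span_pair] at this ⊢
    obtain ⟨m, n, rfl⟩ := this
    exact ⟨mkR m, mkR n, by simp⟩

lemma not_mem_Q (hu : u ^ 2 = PowerSeries.X + 1) :
    yh + mkR (sec 3 (u.toMvPowerSeries 2)) * zh ∉ RingHom.ker (PhiHat u hu) := by
  have hy : yh = mkR (X 1) := rfl
  have hz : zh = mkR (X 2) := rfl
  obtain ⟨a, b, c, d⟩ := Phi_vals u
  intro h
  change PhiHat u hu _ = 0 at h
  rw [hy, hz, ← map_mul, ← map_add, PhiHat_mk, map_add, map_mul, b, c] at h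
  have e := Phi_s u hu
  have h4 : (4 : AA 2) ≠ 0 := by
    intro h
    have := congrArg MvPowerSeries.constantCoeff h
    rw [map_ofNat, map_zero] at this
    norm_num at this
  refine mul_ne_zero h4 (mul_ne_zero w1_ne (pow_ne_zero 2 z_ne)) ?_
  rw [← e]
  linear_combination (2 * Phi (u.toMvPowerSeries 2) (sec 3 (u.toMvPowerSeries 2)) * X 0) * h

end main

lemma rel : xh ^ 2 + yh ^ 2 - (wh + 1) * zh ^ 2 = 0 := by
  have : mkR quadSeries = 0 := (mkR_eq_zero _).2 dvd_rfl
  rw [quadSeries, map_sub, map_add, map_mul, map_add, map_pow, map_pow, map_pow, map_one] at this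
  exact this

/-- `Q = (x, y − αz)` is a height-one prime of `R̂`, and `(x,y,z)R̂ = Q + (y + αz)R̂`. -/
theorem Q_prime_height_one_and_sum (α : Rhat) (hα : IsUnit α) (hsq : α ^ 2 = wh + 1) :
    (∃ hQ : (Ideal.span {xh, yh - α * zh} : Ideal Rhat).IsPrime,
        Order.height (⟨Ideal.span {xh, yh - α * zh}, hQ⟩ : PrimeSpectrum Rhat) = 1) ∧
      Phat = Ideal.span {xh, yh - α * zh} ⊔ Ideal.span {yh + α * zh} := by
  obtain ⟨u, hu, rfl⟩ := alpha_lift α hsq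
  have hker := Q_eq_ker u hu
  have hnot := not_mem_Q u hu
  have : IsDomain (AA 2) := NoZeroDivisors.to_isDomain _
  have hprime : (RingHom.ker (PhiHat u hu)).IsPrime := RingHom.ker_isPrime _
  rw [← hker] at hnot hprime
  clear hker
  revert hnot hprime hsq hα
  generalize mkR (sec 3 (u.toMvPowerSeries 2)) = α
  intro hα hsq hnot hQ
  have hfac : xh * xh = -((yh - α * zh) * (yh + α * zh)) := by
    linear_combination rel - zh ^ 2 * hsq
  refine ⟨⟨hQ, ?_⟩, ?_⟩
  · rw [← PrimeSpectrum.height_eq_orderHeight]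
    change Ideal.height (Ideal.span {xh, yh - α * zh}) = 1
    have hxQ : xh ∈ Ideal.span {xh, yh - α * zh} := Ideal.subset_span (by simp)
    apply le_antisymm
    · apply Ideal.height_le_one_of_isPrincipal_of_mem_minimalPrimes (Ideal.span {xh})
      refine ⟨⟨hQ, (Ideal.span_singleton_le_iff_mem _).2 hxQ⟩, ?_⟩
      rintro P ⟨hP, hxP⟩ hle
      have hxP' := (Ideal.span_singleton_le_iff_mem _).1 hxP
      have : (yh - α * zh) * (yh + α * zh) ∈ P := by
        rw [← neg_mem_iff, ← hfac]
        exact P.mul_mem_left _ hxP'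
      rw [Ideal.span_le, Set.insert_subset_iff, Set.singleton_subset_iff]
      exact ⟨hxP', (hP.mem_or_mem this).resolve_right fun h => hnot (hle h)⟩
    · rw [Order.one_le_iff_ne_zero, Ne, Ideal.height_eq_zero_iff]
      intro hmin
      obtain ⟨r, hr, hxr⟩ := Ideal.exists_mul_mem_of_mem_minimalPrimes hmin hxQ
      exact hr (xh_regular r hxr)
  · rw [Phat, ← Ideal.span_union]
    apply le_antisymm
    · rw [Ideal.span_le]
      have h1 : xh ∈ Ideal.span ({xh, yh - α * zh} ∪ {yh + α * zh}) :=
        Ideal.subset_span (by simp)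
      have h2 : yh - α * zh ∈ Ideal.span ({xh, yh - α * zh} ∪ {yh + α * zh}) :=
        Ideal.subset_span (by simp)
      have h3 : yh + α * zh ∈ Ideal.span ({xh, yh - α * zh} ∪ {yh + α * zh}) :=
        Ideal.subset_span (by simp)
      rintro r (rfl | rfl | rfl)
      · exact h1
      · rw [SetLike.mem_coe, ← Ideal.unit_mul_mem_iff_mem _ two_unit]
        convert Ideal.add_mem _ h2 h3 using 1
        ring
      · rw [SetLike.mem_coe, ← Ideal.unit_mul_mem_iff_mem _ (two_unit.mul hα)]
        convert Ideal.sub_mem _ h3 h2 using 1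
        ring
    · have h1 : xh ∈ Ideal.span {xh, yh, zh} := Ideal.subset_span (by simp)
      have h2 : yh ∈ Ideal.span {xh, yh, zh} := Ideal.subset_span (by simp)
      have h3 : zh ∈ Ideal.span {xh, yh, zh} := Ideal.subset_span (by simp)
      rw [Ideal.span_le]
      rintro r ((rfl | rfl) | rfl)
      · exact h1
      · exact Ideal.sub_mem _ h2 (Ideal.mul_mem_left _ _ h3)
      · exact Ideal.add_mem _ h2 (Ideal.mul_mem_left _ _ h3)
end
end
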